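/- For every generalised Heisenberg group G there exists an automorphism ψ of G such that for every finite generating set S of G, the formal power series Σ_{n≥0} gr_{ψ,G}^S(n) x^n ∈ ℚ⟦x⟧ is transcendental over the field of rational functions ℚ(x) (in particular, it is not a rational function). -/

import Mathlib

/-- Word norm with respect to a finite generating set (inverses of generators allowed). -/
noncomputable def wordNorm {G : Type*} [Group G] (S : Finset G) (g : G) : ℕ :=
  sInf {n | ∃ l : List G, l.length = n ∧ (∀ x ∈ l, x ∈ S ∨ x⁻¹ ∈ S) ∧ l.prod = g}

/-- `x` and `y` are `ψ`-twisted conjugate. -/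
def TwistedConj {G : Type*} [Group G] (ψ : G ≃* G) (x y : G) : Prop :=
  ∃ g : G, g * x * (ψ g)⁻¹ = y

/-- The twisted conjugacy growth function: number of `ψ`-twisted conjugacy classes
with a representative of word norm at most `n`. -/
noncomputable def twistedGrowth {G : Type*} [Group G] (ψ : G ≃* G) (S : Finset G) (n : ℕ) : ℕ :=
  Set.ncard ((fun x => {y | TwistedConj ψ x y}) '' {g : G | wordNorm S g ≤ n})

def GrowthLE (f g : ℕ → ℝ) : Prop :=
  ∃ c : ℕ, 0 < c ∧ ∀ n : ℕ, max 1 (f n) ≤ c * max 1 (g (c * n))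

def GrowthEquiv (f g : ℕ → ℝ) : Prop := GrowthLE f g ∧ GrowthLE g f

/-!
Two elements whose commutator is a minimal nonzero multiple `d` of the central generator split the
group: up to isomorphism it is the set `ℤ × ℤ × W × ℤ`, whose product is addition corrected in the
last, central coordinate by the cocycle `d p q' + B(w, w')`. Let `ψ` negate `W`. A twisted
conjugacy class is determined by `(p, q)`, the class of `w` modulo `2 W`, and a central height
modulo a fixed multiple of `gcd(p, q)`. As words of length `n` have `|p|, |q| ≲ n` and height
`≲ n²`, the growth function is squeezed between rescalings of the sum of `gcd(p, q)` over
`|p|, |q| ≤ n`, which is of order `n² log n`.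

Such a series is transcendental: as `x → 1⁻`, the quantity `(1 - x)³ f(x)` tends to infinity, but
slower than every negative power of `1 - x`, and no algebraic function behaves in this way.
-/

open Filter Topology Polynomial

section BivariatePolynomial

variable {a : ℝ} {l : Filter ℝ} {L : ℝ → ℝ}

lemma tendsto_evalEval_sub_evalEval (hl : l ≤ 𝓝 a)
    (hL : ∀ j : ℕ, Tendsto (fun x => (x - a) * L x ^ j) l (𝓝 0)) (Q : ℝ[X][X]) :
    Tendsto (fun x => Q.evalEval x (L x) - Q.evalEval a (L x)) l (𝓝 0) := by
  induction Q using Polynomial.induction_on' with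
  | add P Q hP hQ => simpa only [evalEval_add, add_sub_add_comm, add_zero] using hP.add hQ
  | monomial j p =>
    have hp (x : ℝ) : p.eval x - p.eval a = (x - a) * (p /ₘ (X - C a)).eval x := by
      conv_lhs => rw [← modByMonic_add_div p (X - C a), modByMonic_X_sub_C_eq_C_eval]
      simp
    have hlim := (hL j).mul (((p /ₘ (X - C a)).continuous.tendsto a).mono_left hl)
    rw [zero_mul] at hlim
    refine hlim.congr fun x => ?_
    simp only [evalEval, eval_monomial, eval_mul, eval_pow, eval_C]
    linear_combination -(L x ^ j) * hp x

lemma not_tendsto_eval_zero [NeBot l] (hL : Tendsto L l atTop) {R : ℝ[X]} (hR : R ≠ 0) :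
    ¬ Tendsto (fun x => R.eval (L x)) l (𝓝 0) := by
  rcases le_or_gt R.degree 0 with hdeg | hdeg
  · rw [eq_C_of_degree_le_zero hdeg] at hR ⊢
    simpa using hR
  · intro hlim
    have habs := (R.abs_tendsto_atTop hdeg).comp hL
    exact not_tendsto_nhds_of_tendsto_atTop habs _ hlim.abs

lemma not_eventually_evalEval_eq_zero_of_not_dvd [NeBot l] (hl : l ≤ 𝓝 a)
    (hL : Tendsto L l atTop) (hsmall : ∀ j : ℕ, Tendsto (fun x => (x - a) * L x ^ j) l (𝓝 0))
    {Q : ℝ[X][X]} (hQ : ¬ C (X - C a) ∣ Q) :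
    ¬ ∀ᶠ x in l, Q.evalEval x (L x) = 0 := by
  intro hzero
  have hspec : Q.map (evalRingHom a) ≠ 0 := by
    contrapose! hQ
    refine (C_dvd_iff_dvd_coeff _ _).2 fun i => dvd_iff_isRoot.2 ?_
    simpa using congrArg (coeff · i) hQ
  have hlim : Tendsto (fun x => -(Q.evalEval x (L x) - Q.evalEval a (L x))) l (𝓝 0) := by
    simpa using (tendsto_evalEval_sub_evalEval hl hsmall Q).neg
  refine not_tendsto_eval_zero hL hspec (hlim.congr' ?_)
  filter_upwards [hzero] with x hx
  rw [hx, zero_sub, neg_neg, map_evalRingHom_eval]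

theorem not_eventually_evalEval_eq_zero [NeBot l] (hl : l ≤ 𝓝[≠] a)
    (hL : Tendsto L l atTop) (hsmall : ∀ j : ℕ, Tendsto (fun x => (x - a) * L x ^ j) l (𝓝 0))
    {Q : ℝ[X][X]} (hQ : Q ≠ 0) :
    ¬ ∀ᶠ x in l, Q.evalEval x (L x) = 0 := by
  intro hzero
  have hunit : ¬ IsUnit (C (X - C a) : ℝ[X][X]) := by
    rw [isUnit_C]
    exact not_isUnit_X_sub_C a
  obtain ⟨n, P, hP, rfl⟩ := WfDvdMonoid.max_power_factor' hQ hunit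
  refine not_eventually_evalEval_eq_zero_of_not_dvd (hl.trans nhdsWithin_le_nhds) hL hsmall hP ?_
  filter_upwards [hzero, hl self_mem_nhdsWithin] with x hx hxa
  simpa [evalEval, sub_ne_zero.2 hxa] using hx

end BivariatePolynomial

/-- The power series `f` converges at `x` with sum `v`. -/
def HasSumAt (f : PowerSeries ℝ) (x v : ℝ) : Prop :=
  HasSum (fun n => PowerSeries.coeff n f * x ^ n) v

namespace HasSumAt

variable {f g : PowerSeries ℝ} {x v w : ℝ}

lemma add (hf : HasSumAt f x v) (hg : HasSumAt g x w) : HasSumAt (f + g) x (v + w) := by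
  simpa only [HasSumAt, map_add, add_mul] using HasSum.add hf hg

lemma mul (hf : HasSumAt f x v) (hg : HasSumAt g x w) : HasSumAt (f * g) x (v * w) := by
  have hcauchy (n : ℕ) : PowerSeries.coeff n (f * g) * x ^ n =
      ∑ ij ∈ Finset.HasAntidiagonal.antidiagonal n, PowerSeries.coeff ij.1 f * x ^ ij.1 *
        (PowerSeries.coeff ij.2 g * x ^ ij.2) := by
    rw [PowerSeries.coeff_mul, Finset.sum_mul]
    refine Finset.sum_congr rfl fun ij hij => ?_
    rw [← Finset.HasAntidiagonal.mem_antidiagonal.1 hij]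
    ring
  have hf_norm := hf.summable.norm
  have hg_norm := hg.summable.norm
  rw [HasSumAt, funext hcauchy, ← hf.tsum_eq, ← hg.tsum_eq,
    tsum_mul_tsum_eq_tsum_sum_antidiagonal_of_summable_norm hf_norm hg_norm]
  exact (summable_norm_sum_mul_antidiagonal_of_summable_norm hf_norm hg_norm).of_norm.hasSum

lemma coe (p : ℝ[X]) (x : ℝ) : HasSumAt p x (p.eval x) := by
  rw [HasSumAt, eval_eq_sum, Polynomial.sum]
  simp only [coeff_coe]
  exact hasSum_sum_of_ne_finset_zero fun n hn => by rw [notMem_support_iff.1 hn, zero_mul]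

lemma pow (hf : HasSumAt f x v) (n : ℕ) : HasSumAt (f ^ n) x (v ^ n) := by
  induction n with
  | zero => simpa using coe 1 x
  | succ n ih => simpa only [pow_succ] using ih.mul hf

lemma aeval (hf : HasSumAt f x v) (P : ℝ[X][X]) :
    HasSumAt (aeval f P) x (P.evalEval x v) := by
  induction P using Polynomial.induction_on' with
  | add P Q hP hQ => simpa only [map_add, evalEval_add] using hP.add hQ
  | monomial n p =>
    simpa [evalEval, aeval_monomial, PowerSeries.algebraMap_apply'] using (coe p x).mul (hf.pow n)

end HasSumAt

theorem transcendental_of_hasSumAt {f : PowerSeries ℝ} {F : ℝ → ℝ} {a : ℝ} {l : Filter ℝ} [NeBot l]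
    (hl : l ≤ 𝓝[≠] a) (hF : ∀ᶠ x in l, HasSumAt f x (F x)) (s : ℝ[X])
    (hlim : Tendsto (fun x => s.eval x * F x) l atTop)
    (hsmall : ∀ j : ℕ, Tendsto (fun x => (x - a) * (s.eval x * F x) ^ j) l (𝓝 0)) :
    Transcendental ℝ[X] f := by
  rintro ⟨P, hP, hPf⟩
  refine not_eventually_evalEval_eq_zero hl hlim hsmall (scaleRoots_ne_zero hP s) ?_
  filter_upwards [hF] with x hx
  have hroot : P.evalEval x (F x) = 0 := by
    refine (hPf ▸ hx.aeval P).unique ?_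
    simp [hasSum_zero]
  have hscale := scaleRoots_eval₂_mul (p := P) (evalRingHom x) (F x) s
  rwa [eval₂_evalRingHom, coe_evalRingHom, hroot, mul_zero] at hscale

section Abelian

variable {u : ℕ → ℝ} {k : ℕ}

lemma tendsto_one_sub_inv_nhdsLT_one : Tendsto (fun x : ℝ => (1 - x)⁻¹) (𝓝[<] 1) atTop := by
  refine tendsto_inv_nhdsGT_zero.comp (tendsto_nhdsWithin_iff.2 ⟨?_, ?_⟩)
  · exact ((continuous_const.sub continuous_id).tendsto' (1 : ℝ) 0 (sub_self 1)).mono_left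
      nhdsWithin_le_nhds
  · filter_upwards [self_mem_nhdsWithin] with x hx using sub_pos.2 (Set.mem_Iio.1 hx)

lemma tendsto_one_sub_pow_mul_tsum_atTop
    (hsum : ∀ᶠ x in 𝓝[<] (1 : ℝ), Summable fun n => u n * x ^ n)
    (hu : Tendsto (fun n => u n / (n + k).choose k) atTop atTop) :
    Tendsto (fun x => (1 - x) ^ (k + 1) * ∑' n, u n * x ^ n) (𝓝[<] 1) atTop := by
  refine tendsto_atTop.2 fun K => ?_
  obtain ⟨N, hN⟩ := eventually_atTop.1 (tendsto_atTop.1 hu (K + 1))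
  set tail : ℕ → ℝ := fun n => u n - (K + 1) * (n + k).choose k
  have htail (n : ℕ) (hn : N ≤ n) : 0 ≤ tail n := by
    have hpos : (0 : ℝ) < (n + k).choose k := mod_cast Nat.choose_pos (Nat.le_add_left k n)
    exact sub_nonneg.2 ((le_div_iff₀ hpos).1 (hN n hn))
  have hhead : Tendsto (fun x : ℝ => (1 - x) ^ (k + 1) * ∑ n ∈ Finset.range N, tail n * x ^ n)
      (𝓝[<] 1) (𝓝 0) := by
    refine Tendsto.mono_left ?_ nhdsWithin_le_nhds
    refine Continuous.tendsto' (by fun_prop) _ _ ?_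
    simp
  filter_upwards [hsum, hhead.eventually_const_le (neg_lt_zero.2 one_pos),
    Ioo_mem_nhdsLT zero_lt_one] with x hx hx_head ⟨hx0, hx1⟩
  have hbinom := hasSum_choose_mul_geometric_of_norm_lt_one k
    (show ‖x‖ < 1 by rwa [Real.norm_of_nonneg hx0.le])
  have hdiff : HasSum (fun n => tail n * x ^ n)
      (∑' n, u n * x ^ n - (K + 1) * (1 / (1 - x) ^ (k + 1))) := by
    simpa only [tail, sub_mul, mul_assoc] using hx.hasSum.sub (hbinom.mul_left (K + 1))
  have hle := sum_le_hasSum (Finset.range N) (fun n hn => mul_nonneg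
    (htail n (not_lt.1 (Finset.mem_range.not.1 hn))) (pow_nonneg hx0.le n)) hdiff
  have hpow : 0 < (1 - x) ^ (k + 1) := pow_pos (sub_pos.2 hx1) _
  have hscaled := hx_head.trans (mul_le_mul_of_nonneg_left hle hpow.le)
  rw [mul_sub, mul_left_comm, mul_one_div_cancel hpow.ne', mul_one] at hscaled
  linarith

lemma log_add_one_le_log_inv_add (n : ℕ) {t : ℝ} (ht : 0 < t) :
    Real.log (n + 1) ≤ Real.log t⁻¹ + (n + 1) * t := by
  have hlog := Real.log_le_sub_one_of_pos (show 0 < (n + 1 : ℝ) * t by positivity)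
  rw [Real.log_mul (by positivity) ht.ne'] at hlog
  rw [Real.log_inv]
  linarith

lemma add_one_mul_choose_le (n k : ℕ) :
    (n + 1) * (n + k).choose k ≤ (k + 1) * (n + (k + 1)).choose (k + 1) := by
  rw [mul_comm (k + 1), ← add_assoc, ← Nat.add_one_mul_choose_eq]
  exact Nat.mul_le_mul_right _ (by lia)

lemma hasSum_choose_log_majorant (k : ℕ) {x : ℝ} (hx0 : 0 ≤ x) (hx1 : x < 1) :
    HasSum (fun n : ℕ => (1 + Real.log (1 - x)⁻¹) * ((n + k).choose k * x ^ n) +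
        (1 - x) * (k + 1) * ((n + (k + 1)).choose (k + 1) * x ^ n))
      ((Real.log (1 - x)⁻¹ + k + 2) / (1 - x) ^ (k + 1)) := by
  have hx : ‖x‖ < 1 := by rwa [Real.norm_of_nonneg hx0]
  have hne : 1 - x ≠ 0 := (sub_pos.2 hx1).ne'
  have hvalue : (Real.log (1 - x)⁻¹ + k + 2) / (1 - x) ^ (k + 1) =
      (1 + Real.log (1 - x)⁻¹) * (1 / (1 - x) ^ (k + 1)) +
        (1 - x) * (k + 1) * (1 / (1 - x) ^ (k + 1 + 1)) := by
    rw [pow_succ (1 - x) (k + 1)]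
    field_simp
    ring
  rw [hvalue]
  exact ((hasSum_choose_mul_geometric_of_norm_lt_one k hx).mul_left _).add
    ((hasSum_choose_mul_geometric_of_norm_lt_one (k + 1) hx).mul_left _)

lemma norm_mul_pow_le_majorant {C : ℝ} (hC : 0 ≤ C)
    (hu : ∀ n : ℕ, |u n| ≤ C * ((n + k).choose k * (1 + Real.log (n + 1))))
    {x : ℝ} (hx0 : 0 ≤ x) (hx1 : x < 1) (n : ℕ) :
    ‖u n * x ^ n‖ ≤ C * ((1 + Real.log (1 - x)⁻¹) * ((n + k).choose k * x ^ n) +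
        (1 - x) * (k + 1) * ((n + (k + 1)).choose (k + 1) * x ^ n)) := by
  have ht : 0 < 1 - x := sub_pos.2 hx1
  have hchoose : ((n + 1) * (n + k).choose k : ℝ) ≤ (k + 1) * (n + (k + 1)).choose (k + 1) :=
    mod_cast add_one_mul_choose_le n k
  have hlog := log_add_one_le_log_inv_add n ht
  rw [norm_mul, Real.norm_eq_abs, Real.norm_of_nonneg (pow_nonneg hx0 n)]
  calc |u n| * x ^ n
      ≤ C * ((n + k).choose k * (1 + (Real.log (1 - x)⁻¹ + (n + 1) * (1 - x)))) * x ^ n := by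
        gcongr
        exact (hu n).trans (by gcongr)
    _ = C * ((1 + Real.log (1 - x)⁻¹) * ((n + k).choose k * x ^ n) +
        (1 - x) * ((n + 1) * (n + k).choose k) * x ^ n) := by ring
    _ ≤ C * ((1 + Real.log (1 - x)⁻¹) * ((n + k).choose k * x ^ n) +
        (1 - x) * ((k + 1) * (n + (k + 1)).choose (k + 1)) * x ^ n) := by gcongr
    _ = _ := by ring

lemma summable_mul_pow_of_abs_le {C : ℝ} (hC : 0 ≤ C)
    (hu : ∀ n : ℕ, |u n| ≤ C * ((n + k).choose k * (1 + Real.log (n + 1))))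
    {x : ℝ} (hx0 : 0 ≤ x) (hx1 : x < 1) : Summable fun n => u n * x ^ n :=
  .of_norm_bounded ((hasSum_choose_log_majorant k hx0 hx1).summable.mul_left C)
    (norm_mul_pow_le_majorant hC hu hx0 hx1)

lemma isBigO_one_sub_pow_mul_tsum_log {C : ℝ} (hC : 0 ≤ C)
    (hu : ∀ n : ℕ, |u n| ≤ C * ((n + k).choose k * (1 + Real.log (n + 1)))) :
    (fun x => (1 - x) ^ (k + 1) * ∑' n, u n * x ^ n) =O[𝓝[<] 1]
      fun x => Real.log (1 - x)⁻¹ := by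
  refine .of_bound (C * (k + 3)) ?_
  filter_upwards [Ioo_mem_nhdsLT (zero_lt_one' ℝ), (Real.tendsto_log_atTop.comp
    tendsto_one_sub_inv_nhdsLT_one).eventually_ge_atTop 1] with x ⟨hx0, hx1⟩ hlog
  rw [Function.comp_apply] at hlog
  have hpow : 0 < (1 - x) ^ (k + 1) := pow_pos (sub_pos.2 hx1) _
  have htsum := tsum_of_norm_bounded ((hasSum_choose_log_majorant k hx0.le hx1).mul_left C)
    (norm_mul_pow_le_majorant hC hu hx0.le hx1)
  rw [norm_mul, Real.norm_of_nonneg hpow.le, Real.norm_of_nonneg (zero_le_one.trans hlog)]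
  calc (1 - x) ^ (k + 1) * ‖∑' n, u n * x ^ n‖
      ≤ (1 - x) ^ (k + 1) * (C * ((Real.log (1 - x)⁻¹ + k + 2) / (1 - x) ^ (k + 1))) := by gcongr
    _ = C * (Real.log (1 - x)⁻¹ + (k + 2) * 1) := by field_simp; ring
    _ ≤ C * (Real.log (1 - x)⁻¹ + (k + 2) * Real.log (1 - x)⁻¹) := by gcongr
    _ = C * (k + 3) * Real.log (1 - x)⁻¹ := by ring

lemma tendsto_sub_one_mul_pow_of_isBigO_log {L : ℝ → ℝ}
    (hL : L =O[𝓝[<] 1] fun x => Real.log (1 - x)⁻¹) (j : ℕ) :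
    Tendsto (fun x => (x - 1) * L x ^ j) (𝓝[<] 1) (𝓝 0) := by
  have hlittle := (hL.pow j).trans_isLittleO
    ((Real.isLittleO_pow_log_id_atTop (n := j)).comp_tendsto tendsto_one_sub_inv_nhdsLT_one)
  have hlim := hlittle.tendsto_div_nhds_zero.neg
  rw [neg_zero] at hlim
  refine hlim.congr fun x => ?_
  rw [Function.comp_apply, id, div_inv_eq_mul]
  ring

end Abelian

lemma add_one_pow_le_factorial_mul_choose (n k : ℕ) :
    (n + 1) ^ k ≤ k.factorial * (n + k).choose k := by
  have h := Nat.pow_le_choose (α := ℚ) k (n + k)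
  rw [Nat.sub_add_comm (Nat.le_add_left k n), Nat.add_sub_cancel, div_le_iff₀' (by positivity)] at h
  exact_mod_cast h

lemma exists_abs_le_choose_mul_log_of_isBigO {u : ℕ → ℝ} {k : ℕ}
    (hu : u =O[atTop] fun n : ℕ => ((n + 1 : ℝ) ^ k * (1 + Real.log (n + 1)))) :
    ∃ C : ℝ, 0 ≤ C ∧ ∀ n : ℕ, |u n| ≤ C * ((n + k).choose k * (1 + Real.log (n + 1))) := by
  obtain ⟨C, hC, hCu⟩ := Asymptotics.bound_of_isBigO_nat_atTop hu
  refine ⟨C * k.factorial, by positivity, fun n => ?_⟩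
  have hlog : 0 ≤ Real.log (n + 1) := Real.log_nonneg (by simp)
  have hpow : ((n + 1) ^ k : ℝ) ≤ k.factorial * (n + k).choose k :=
    mod_cast add_one_pow_le_factorial_mul_choose n k
  have hbound := hCu (x := n) (by positivity)
  rw [Real.norm_eq_abs, Real.norm_of_nonneg (by positivity)] at hbound
  calc |u n| ≤ C * ((n + 1) ^ k * (1 + Real.log (n + 1))) := hbound
    _ ≤ C * (k.factorial * (n + k).choose k * (1 + Real.log (n + 1))) := by gcongr
    _ = C * k.factorial * ((n + k).choose k * (1 + Real.log (n + 1))) := by ring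

lemma tendsto_div_choose_atTop {u : ℕ → ℝ} {k : ℕ}
    (hu : Tendsto (fun n : ℕ => u n / (n + 1) ^ k) atTop atTop) :
    Tendsto (fun n => u n / (n + k).choose k) atTop atTop := by
  refine tendsto_atTop_mono' _ ?_ hu
  filter_upwards [hu.eventually_ge_atTop 0] with n hn
  have hpos : (0 : ℝ) < (n + k).choose k := mod_cast Nat.choose_pos (Nat.le_add_left k n)
  have hchoose : ((n + k).choose k : ℝ) ≤ (n + 1) ^ k := by
    have h := Nat.choose_le_sub_pow (n + k) k
    rw [Nat.sub_add_comm (Nat.le_add_left k n), Nat.add_sub_cancel] at h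
    exact_mod_cast h
  have hun : 0 ≤ u n := by simpa using (le_div_iff₀ (by positivity)).1 hn
  exact div_le_div_of_nonneg_left hun hpos hchoose

theorem transcendental_real_of_tendsto_of_isBigO {u : ℕ → ℝ} (k : ℕ)
    (hlower : Tendsto (fun n : ℕ => u n / (n + 1) ^ k) atTop atTop)
    (hupper : u =O[atTop] fun n : ℕ => ((n + 1 : ℝ) ^ k * (1 + Real.log (n + 1)))) :
    Transcendental ℝ[X] (PowerSeries.mk u) := by
  obtain ⟨C, hC, hbound⟩ := exists_abs_le_choose_mul_log_of_isBigO hupper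
  have hsum : ∀ᶠ x in 𝓝[<] (1 : ℝ), Summable fun n => u n * x ^ n := by
    filter_upwards [Ioo_mem_nhdsLT zero_lt_one] with x ⟨hx0, hx1⟩
      using summable_mul_pow_of_abs_le hC hbound hx0.le hx1
  have heval (x : ℝ) : ((1 - X : ℝ[X]) ^ (k + 1)).eval x = (1 - x) ^ (k + 1) := by simp
  refine transcendental_of_hasSumAt (l := 𝓝[<] 1) (nhdsWithin_mono _ fun x hx => ne_of_lt hx)
    (F := fun x => ∑' n, u n * x ^ n) ?_ ((1 - X) ^ (k + 1)) ?_ fun j => ?_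
  · filter_upwards [hsum] with x hx
    simpa only [HasSumAt, PowerSeries.coeff_mk] using hx.hasSum
  · simpa only [heval] using
      tendsto_one_sub_pow_mul_tsum_atTop hsum (tendsto_div_choose_atTop hlower)
  · simpa only [heval] using
      tendsto_sub_one_mul_pow_of_isBigO_log (isBigO_one_sub_pow_mul_tsum_log hC hbound) j

theorem transcendental_of_tendsto_of_isBigO {R : Type*} [CommRing R] [Algebra R ℝ]
    [FaithfulSMul R ℝ] {u : ℕ → R} (k : ℕ)
    (hlower : Tendsto (fun n : ℕ => algebraMap R ℝ (u n) / (n + 1) ^ k) atTop atTop)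
    (hupper : (fun n => algebraMap R ℝ (u n)) =O[atTop]
      fun n : ℕ => ((n + 1 : ℝ) ^ k * (1 + Real.log (n + 1)))) :
    Transcendental R[X] (PowerSeries.mk u) := by
  have hreal := transcendental_real_of_tendsto_of_isBigO k hlower hupper
  refine Transcendental.of_ringHom_of_comp_eq (mapRingHom (algebraMap R ℝ))
    (PowerSeries.map (algebraMap R ℝ)) (S := ℝ[X]) (B := PowerSeries ℝ) ?_
    (map_injective _ (FaithfulSMul.algebraMap_injective R ℝ)) ?_
  · convert hreal
    ext n
    simp
  · ext p n <;> simp [PowerSeries.algebraMap_apply']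

section GcdSum

open Finset

/-- The sum of `gcd(p, q)` over the lattice points of the square `[-N, N]²`. -/
noncomputable def gcdSum (N : ℕ) : ℕ :=
  ∑ x ∈ Icc (-N : ℤ) N ×ˢ Icc (-N : ℤ) N, Int.gcd x.1 x.2

lemma card_filter_dvd_Icc_neg (N : ℕ) {e : ℕ} (he : 0 < e) :
    #{p ∈ Icc (-N : ℤ) N | (e : ℤ) ∣ p} = 2 * (N / e) + 1 := by
  have he' : (0 : ℤ) < e := mod_cast he
  have himage : {p ∈ Icc (-N : ℤ) N | (e : ℤ) ∣ p} =
      (Icc (-(N / e : ℕ) : ℤ) (N / e : ℕ)).image ((e : ℤ) * ·) := by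
    ext p
    simp only [mem_filter, mem_Icc, mem_image, Int.natCast_ediv]
    constructor
    · rintro ⟨⟨hlow, hhigh⟩, m, rfl⟩
      refine ⟨m, ⟨?_, (Int.le_ediv_iff_mul_le he').2 (by linarith)⟩, rfl⟩
      exact neg_le.1 ((Int.le_ediv_iff_mul_le he').2 (by linarith))
    · rintro ⟨m, ⟨hlow, hhigh⟩, rfl⟩
      have hlow' := (Int.le_ediv_iff_mul_le he').1 (neg_le.1 hlow)
      have hhigh' := (Int.le_ediv_iff_mul_le he').1 hhigh
      exact ⟨⟨by linarith, by linarith⟩, dvd_mul_right _ _⟩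
  rw [himage, card_image_of_injective _ (mul_right_injective₀ he'.ne'), Int.card_Icc]
  lia

lemma gcd_le_of_mem_Icc_neg {N : ℕ} {p q : ℤ} (hp : p ∈ Icc (-N : ℤ) N)
    (hq : q ∈ Icc (-N : ℤ) N) : Int.gcd p q ≤ N := by
  rw [mem_Icc] at hp hq
  rcases eq_or_ne p 0 with rfl | hp0
  · rw [Int.gcd_zero_left]
    lia
  · have := Int.gcd_le_natAbs_left q hp0
    lia

lemma filter_dvd_Icc_eq_divisors_gcd {N : ℕ} {p q : ℤ} (hp : p ∈ Icc (-N : ℤ) N)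
    (hq : q ∈ Icc (-N : ℤ) N) (hpq : (p, q) ≠ 0) :
    ((Icc 1 N).filter fun e : ℕ => (e : ℤ) ∣ p ∧ (e : ℤ) ∣ q) = (Int.gcd p q).divisors := by
  have hgcd : Int.gcd p q ≠ 0 := by simpa [Int.gcd_eq_zero_iff] using hpq
  ext e
  simp only [mem_filter, mem_Icc, Nat.mem_divisors, ← Int.dvd_coe_gcd_iff,
    Int.natCast_dvd_natCast, hgcd, ne_eq, not_false_eq_true, and_true]
  refine ⟨And.right, fun hdvd => ⟨⟨Nat.pos_of_dvd_of_pos hdvd (Nat.pos_of_ne_zero hgcd), ?_⟩, hdvd⟩⟩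
  exact (Nat.le_of_dvd (Nat.pos_of_ne_zero hgcd) hdvd).trans (gcd_le_of_mem_Icc_neg hp hq)

lemma card_filter_dvd_ne_zero (N : ℕ) {e : ℕ} (he : 0 < e) :
    #{x ∈ Icc (-N : ℤ) N ×ˢ Icc (-N : ℤ) N | ((e : ℤ) ∣ x.1 ∧ (e : ℤ) ∣ x.2) ∧ x ≠ 0} =
      4 * ((N / e) * (N / e + 1)) := by
  have herase : {x ∈ Icc (-N : ℤ) N ×ˢ Icc (-N : ℤ) N |
      ((e : ℤ) ∣ x.1 ∧ (e : ℤ) ∣ x.2) ∧ x ≠ 0} =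
      ({p ∈ Icc (-N : ℤ) N | (e : ℤ) ∣ p} ×ˢ {q ∈ Icc (-N : ℤ) N | (e : ℤ) ∣ q}).erase 0 := by
    ext x
    simp only [mem_filter, mem_product, mem_erase]
    tauto
  rw [herase, card_erase_of_mem (by simp), card_product, card_filter_dvd_Icc_neg N he]
  exact Nat.sub_eq_of_eq_add (by ring)

theorem gcdSum_eq (N : ℕ) :
    gcdSum N = 4 * ∑ e ∈ Icc 1 N, e.totient * ((N / e) * (N / e + 1)) := by
  set box := Icc (-N : ℤ) N ×ˢ Icc (-N : ℤ) N
  have hgcd : ∀ x ∈ box, Int.gcd x.1 x.2 = ∑ e ∈ Icc 1 N,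
      if ((e : ℤ) ∣ x.1 ∧ (e : ℤ) ∣ x.2) ∧ x ≠ 0 then e.totient else 0 := by
    rintro ⟨p, q⟩ hx
    obtain ⟨hp, hq⟩ := mem_product.1 hx
    by_cases hpq : (p, q) = 0
    · obtain ⟨rfl, rfl⟩ := Prod.mk_eq_zero.1 hpq
      simp
    · simp only [hpq, ne_eq, not_false_eq_true, and_true]
      rw [← sum_filter, filter_dvd_Icc_eq_divisors_gcd hp hq hpq, Nat.sum_totient]
  calc gcdSum N = ∑ e ∈ Icc 1 N, ∑ x ∈ box,
        if ((e : ℤ) ∣ x.1 ∧ (e : ℤ) ∣ x.2) ∧ x ≠ 0 then e.totient else 0 := by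
        rw [gcdSum, sum_congr rfl hgcd, sum_comm]
    _ = ∑ e ∈ Icc 1 N, 4 * (e.totient * ((N / e) * (N / e + 1))) := by
        refine sum_congr rfl fun e he => ?_
        rw [← sum_filter, sum_const, card_filter_dvd_ne_zero N (mem_Icc.1 he).1, smul_eq_mul]
        ring
    _ = _ := (mul_sum ..).symm

theorem gcdSum_le (N : ℕ) : (gcdSum N : ℝ) ≤ 8 * N ^ 2 * (1 + Real.log N) := by
  have hterm : ∀ e ∈ Icc 1 N, (e.totient * ((N / e : ℕ) * ((N / e : ℕ) + 1)) : ℝ) ≤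
      2 * N ^ 2 * (e : ℝ)⁻¹ := by
    intro e he
    obtain ⟨he1, heN⟩ := mem_Icc.1 he
    have he0 : (0 : ℝ) < e := mod_cast he1
    have hquot : ((N / e : ℕ) : ℝ) ≤ N / e := Nat.cast_div_le
    have hone : (1 : ℝ) ≤ N / e := (one_le_div he0).2 (mod_cast heN)
    have htot : (e.totient : ℝ) ≤ e := mod_cast Nat.totient_le e
    calc (e.totient * ((N / e : ℕ) * ((N / e : ℕ) + 1)) : ℝ)
        ≤ e * ((N / e) * (N / e + N / e)) := by gcongr
      _ = 2 * N ^ 2 * (e : ℝ)⁻¹ := by field_simp; ring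
  have hharmonic : ∑ e ∈ Icc 1 N, (e : ℝ)⁻¹ ≤ 1 + Real.log N := by
    simpa [harmonic_eq_sum_Icc] using harmonic_le_one_add_log N
  calc (gcdSum N : ℝ) = 4 * ∑ e ∈ Icc 1 N, (e.totient * ((N / e : ℕ) * ((N / e : ℕ) + 1)) : ℝ) := by
        rw [gcdSum_eq]; push_cast; rfl
    _ ≤ 4 * ∑ e ∈ Icc 1 N, 2 * N ^ 2 * (e : ℝ)⁻¹ := by
        gcongr 4 * ?_
        exact sum_le_sum hterm
    _ = 8 * N ^ 2 * ∑ e ∈ Icc 1 N, (e : ℝ)⁻¹ := by rw [← mul_sum]; ring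
    _ ≤ 8 * N ^ 2 * (1 + Real.log N) := by gcongr

lemma sq_div_two_le_floor_mul {x : ℝ} (hx : 1 ≤ x) : x ^ 2 / 2 ≤ ⌊x⌋₊ * (⌊x⌋₊ + 1) := by
  have hfloor : (1 : ℝ) ≤ ⌊x⌋₊ := mod_cast (Nat.one_le_floor_iff x).2 hx
  nlinarith [Nat.lt_floor_add_one x]

lemma inv_mul_sq_le_totient_mul {l N : ℕ} (hl : l.Prime) (hlN : l ≤ N) :
    (N : ℝ) ^ 2 * (1 / l) ≤ 4 * (l.totient * ((N / l : ℕ) * ((N / l : ℕ) + 1))) := by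
  have hl0 : (0 : ℝ) < l := mod_cast hl.pos
  have htot : (l : ℝ) / 2 ≤ l.totient := by
    have : (2 : ℝ) ≤ l := mod_cast hl.two_le
    rw [Nat.totient_prime hl, Nat.cast_sub hl.one_le]
    push_cast
    linarith
  have hquot := sq_div_two_le_floor_mul ((one_le_div hl0).2 (Nat.cast_le.2 hlN))
  rw [Nat.floor_div_eq_div] at hquot
  calc (N : ℝ) ^ 2 * (1 / l) = 4 * (l / 2 * ((N / l) ^ 2 / 2)) := by field_simp; ring
    _ ≤ _ := by gcongr

theorem sq_mul_sum_primes_inv_le_gcdSum (N : ℕ) :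
    (N : ℝ) ^ 2 * ∑ l ∈ range (N + 1), {p : ℕ | p.Prime}.indicator (fun p => (1 / p : ℝ)) l ≤
      gcdSum N := by
  have hprimes : {l ∈ range (N + 1) | l.Prime} ⊆ Icc 1 N := fun l hl => by
    simp only [mem_filter, mem_range] at hl
    exact mem_Icc.2 ⟨hl.2.one_le, Nat.lt_succ_iff.1 hl.1⟩
  have hindicator : ∑ l ∈ range (N + 1), {p : ℕ | p.Prime}.indicator (fun p => (1 / p : ℝ)) l =
      ∑ l ∈ range (N + 1) with l.Prime, (1 / l : ℝ) := by
    simp only [sum_filter, Set.indicator_apply, Set.mem_ofPred_eq]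
  rw [hindicator, mul_sum]
  calc ∑ l ∈ range (N + 1) with l.Prime, (N : ℝ) ^ 2 * (1 / l)
      ≤ ∑ l ∈ range (N + 1) with l.Prime,
          (4 * (l.totient * ((N / l : ℕ) * ((N / l : ℕ) + 1))) : ℝ) := by
        refine sum_le_sum fun l hl => ?_
        simp only [mem_filter, mem_range] at hl
        exact inv_mul_sq_le_totient_mul hl.2 (Nat.lt_succ_iff.1 hl.1)
    _ ≤ ∑ l ∈ Icc 1 N, (4 * (l.totient * ((N / l : ℕ) * ((N / l : ℕ) + 1))) : ℝ) :=
        sum_le_sum_of_subset_of_nonneg hprimes fun _ _ _ => by positivity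
    _ = gcdSum N := by rw [gcdSum_eq, ← mul_sum]; push_cast; rfl

theorem tendsto_gcdSum_div_sq : Tendsto (fun N : ℕ => (gcdSum N : ℝ) / N ^ 2) atTop atTop := by
  have hprimes := (not_summable_iff_tendsto_nat_atTop_of_nonneg
    (Set.indicator_nonneg
      fun (p : ℕ) _ => one_div_nonneg.2 p.cast_nonneg)).1 not_summable_one_div_on_primes
  refine tendsto_atTop_mono' _ ?_ ((tendsto_add_atTop_iff_nat 1).2 hprimes)
  filter_upwards [eventually_gt_atTop 0] with N hN
  rw [le_div_iff₀' (by positivity)]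
  exact sq_mul_sum_primes_inv_le_gcdSum N

end GcdSum

section GcdSumGrowth

variable {u : ℕ → ℕ}

lemma tendsto_div_sq_of_gcdSum_le {D : ℕ} (hD : 0 < D)
    (hu : ∀ N n, D * N ≤ n → gcdSum N ≤ u n) :
    Tendsto (fun n : ℕ => (u n : ℝ) / (n + 1) ^ 2) atTop atTop := by
  have hlim : Tendsto (fun n : ℕ => (gcdSum (n / D) : ℝ) / (n / D : ℕ) ^ 2 / (2 * D) ^ 2)
      atTop atTop :=
    (tendsto_gcdSum_div_sq.comp (Nat.tendsto_div_const_atTop hD.ne')).atTop_div_const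
      (by positivity)
  refine tendsto_atTop_mono' _ ?_ hlim
  filter_upwards [eventually_ge_atTop D] with n hn
  have hquot : 1 ≤ n / D := (Nat.one_le_div_iff hD).2 hn
  have hn_lt : n + 1 ≤ 2 * D * (n / D) := by
    have := Nat.lt_mul_div_succ n hD
    nlinarith
  have hn_sq : ((n : ℝ) + 1) ^ 2 ≤ (n / D : ℕ) ^ 2 * (2 * D) ^ 2 := by
    rw [← mul_pow, mul_comm]
    gcongr
    exact_mod_cast hn_lt
  rw [div_div]
  gcongr
  exact_mod_cast hu _ _ (Nat.mul_div_le n D)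

lemma isBigO_sq_mul_log_of_le_gcdSum {K C : ℕ}
    (hu : ∀ n, u n ≤ K * (gcdSum (C * n) + (n + 1) ^ 2)) :
    (fun n => (u n : ℝ)) =O[atTop] fun n : ℕ => ((n + 1 : ℝ) ^ 2 * (1 + Real.log (n + 1))) := by
  have hgcd (n : ℕ) : (gcdSum (C * n) : ℝ) ≤
      8 * C ^ 2 * (1 + Real.log C) * ((n + 1) ^ 2 * (1 + Real.log (n + 1))) := by
    have hlogC := Real.log_natCast_nonneg C
    have hlogn : 0 ≤ Real.log (n + 1) := Real.log_nonneg (by simp)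
    have hlogCn : 0 ≤ Real.log (C * n) := mod_cast Real.log_natCast_nonneg (C * n)
    have hlog_le : Real.log (C * n) ≤ Real.log C + Real.log (n + 1) := by
      rcases C.eq_zero_or_pos with rfl | hC
      · simpa using hlogn
      rcases n.eq_zero_or_pos with rfl | hn
      · simpa using hlogC
      rw [Real.log_mul (by positivity) (by positivity)]
      gcongr
      simp
    have hlog : 1 + Real.log (C * n) ≤ (1 + Real.log C) * (1 + Real.log (n + 1)) := by
      nlinarith [mul_nonneg hlogC hlogn]
    calc (gcdSum (C * n) : ℝ) ≤ 8 * (C * n) ^ 2 * (1 + Real.log (C * n)) := mod_cast gcdSum_le _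
      _ ≤ 8 * (C * (n + 1)) ^ 2 * ((1 + Real.log C) * (1 + Real.log (n + 1))) := by
        gcongr
        simp
      _ = _ := by ring
  refine .of_bound (K * (8 * C ^ 2 * (1 + Real.log C) + 1)) (Eventually.of_forall fun n => ?_)
  have hlogn : 0 ≤ Real.log (n + 1) := Real.log_nonneg (by simp)
  rw [Real.norm_of_nonneg (by positivity), Real.norm_of_nonneg (by positivity)]
  calc (u n : ℝ) ≤ K * (gcdSum (C * n) + (n + 1) ^ 2 * 1) := by
        rw [mul_one]; exact_mod_cast hu n
    _ ≤ K * (8 * C ^ 2 * (1 + Real.log C) * ((n + 1) ^ 2 * (1 + Real.log (n + 1))) +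
          (n + 1) ^ 2 * (1 + Real.log (n + 1))) := by
        gcongr
        · exact hgcd n
        · linarith
    _ = _ := by ring

theorem transcendental_of_gcdSum_le_of_le_gcdSum {D K C : ℕ} (hD : 0 < D)
    (hlower : ∀ N n, D * N ≤ n → gcdSum N ≤ u n)
    (hupper : ∀ n, u n ≤ K * (gcdSum (C * n) + (n + 1) ^ 2)) :
    Transcendental ℚ[X] (PowerSeries.mk fun n => (u n : ℚ)) := by
  refine transcendental_of_tendsto_of_isBigO 2 ?_ ?_
  · simpa using tendsto_div_sq_of_gcdSum_le hD hlower
  · simpa using isBigO_sq_mul_log_of_le_gcdSum hupper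

end GcdSumGrowth

section WordNorm

variable {G H : Type*} [Group G] [Group H] {S : Finset G}

lemma wordNorm_prod_le_length {l : List G} (hl : ∀ x ∈ l, x ∈ S ∨ x⁻¹ ∈ S) :
    wordNorm S l.prod ≤ l.length :=
  Nat.sInf_le ⟨l, rfl, hl, rfl⟩

@[simp]
lemma wordNorm_one : wordNorm S (1 : G) = 0 :=
  Nat.le_zero.1 (wordNorm_prod_le_length (l := []) (by simp))

lemma exists_word_length_eq_wordNorm (hS : Subgroup.closure (S : Set G) = ⊤) (g : G) :
    ∃ l : List G, l.length = wordNorm S g ∧ (∀ x ∈ l, x ∈ S ∨ x⁻¹ ∈ S) ∧ l.prod = g := by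
  have hg : g ∈ (Subgroup.closure (S : Set G)).toSubmonoid := hS ▸ Subgroup.mem_top g
  rw [Subgroup.closure_toSubmonoid] at hg
  obtain ⟨l, hl, hlg⟩ := Submonoid.exists_list_of_mem_closure hg
  exact Nat.sInf_mem (s := {n | ∃ l : List G, l.length = n ∧ (∀ x ∈ l, x ∈ S ∨ x⁻¹ ∈ S) ∧
    l.prod = g}) ⟨l.length, l, rfl, by simpa using hl, hlg⟩

lemma wordNorm_mul_le (hS : Subgroup.closure (S : Set G) = ⊤) (g h : G) :
    wordNorm S (g * h) ≤ wordNorm S g + wordNorm S h := by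
  obtain ⟨l, hl_length, hl, rfl⟩ := exists_word_length_eq_wordNorm hS g
  obtain ⟨m, hm_length, hm, rfl⟩ := exists_word_length_eq_wordNorm hS h
  rw [← hl_length, ← hm_length, ← List.length_append, ← List.prod_append]
  exact wordNorm_prod_le_length fun x hx => (List.mem_append.1 hx).elim (hl x) (hm x)

lemma wordNorm_inv_le (hS : Subgroup.closure (S : Set G) = ⊤) (g : G) :
    wordNorm S g⁻¹ ≤ wordNorm S g := by
  obtain ⟨l, hl_length, hl, rfl⟩ := exists_word_length_eq_wordNorm hS g
  rw [← hl_length, List.prod_inv_reverse]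
  refine (wordNorm_prod_le_length fun x hx => ?_).trans (by simp)
  obtain ⟨y, hy, rfl⟩ := List.mem_map.1 (List.mem_reverse.1 hx)
  simpa using (hl y hy).symm

lemma wordNorm_pow_le (hS : Subgroup.closure (S : Set G) = ⊤) (g : G) (n : ℕ) :
    wordNorm S (g ^ n) ≤ n * wordNorm S g := by
  induction n with
  | zero => simp
  | succ n ih =>
    rw [pow_succ, add_one_mul]
    exact (wordNorm_mul_le hS _ _).trans (Nat.add_le_add_right ih _)

lemma wordNorm_zpow_le (hS : Subgroup.closure (S : Set G) = ⊤) (g : G) (n : ℤ) :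
    wordNorm S (g ^ n) ≤ n.natAbs * wordNorm S g := by
  obtain ⟨m, rfl | rfl⟩ := n.eq_nat_or_neg
  · simpa using wordNorm_pow_le hS g m
  · simpa using (wordNorm_inv_le hS (g ^ m)).trans (wordNorm_pow_le hS g m)

lemma wordNorm_induction (hS : Subgroup.closure (S : Set G) = ⊤) {P : G → ℕ → Prop}
    (one : P 1 0)
    (letter_mul : ∀ s g n, s ∈ S ∨ s⁻¹ ∈ S → wordNorm S g ≤ n → P g n → P (s * g) (n + 1))
    (g : G) : P g (wordNorm S g) := by
  obtain ⟨l, hl_length, hl, rfl⟩ := exists_word_length_eq_wordNorm hS g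
  rw [← hl_length]
  clear hl_length
  induction l with
  | nil => exact one
  | cons s l ih =>
    obtain ⟨hs, hl⟩ := List.forall_mem_cons.1 hl
    exact letter_mul s l.prod l.length hs (wordNorm_prod_le_length hl) (ih hl)

lemma exists_forall_letter_le (S : Finset G) (h : G → ℕ) :
    ∃ C, ∀ s, s ∈ S ∨ s⁻¹ ∈ S → h s ≤ C := by
  have hle (s : G) (hs : s ∈ S) : h s + h s⁻¹ ≤ ∑ s ∈ S, (h s + h s⁻¹) :=
    Finset.single_le_sum (f := fun s => h s + h s⁻¹) (fun _ _ => Nat.zero_le _) hs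
  refine ⟨∑ s ∈ S, (h s + h s⁻¹), fun s hs => ?_⟩
  rcases hs with hs | hs
  · exact le_of_add_le_left (hle s hs)
  · simpa using le_of_add_le_right (hle s⁻¹ hs)

lemma exists_natAbs_le_mul_wordNorm (hS : Subgroup.closure (S : Set G) = ⊤) {f : G → ℤ}
    (hf : ∀ g h, f (g * h) = f g + f h) : ∃ C : ℕ, ∀ g, (f g).natAbs ≤ C * wordNorm S g := by
  obtain ⟨C, hC⟩ := exists_forall_letter_le S fun s => (f s).natAbs
  have hone : f 1 = 0 := by simpa using hf 1 1
  refine ⟨C, wordNorm_induction hS (P := fun g n => (f g).natAbs ≤ C * n) (by simp [hone])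
    fun s g n hs _ ih => ?_⟩
  calc (f (s * g)).natAbs ≤ (f s).natAbs + (f g).natAbs := hf s g ▸ Int.natAbs_add_le ..
    _ ≤ C + C * n := Nat.add_le_add (hC s hs) ih
    _ = C * (n + 1) := by ring

lemma exists_natAbs_le_mul_wordNorm_sq (hS : Subgroup.closure (S : Set G) = ⊤) {f : G → ℤ}
    {β : G → G → ℤ} (hf : ∀ g h, f (g * h) = f g + f h + β g h)
    (hβ : ∀ g h h', β g (h * h') = β g h + β g h') (hone : f 1 = 0) :
    ∃ C : ℕ, ∀ g, (f g).natAbs ≤ C * wordNorm S g ^ 2 := by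
  choose Cβ hCβ using fun g => exists_natAbs_le_mul_wordNorm hS (hβ g)
  obtain ⟨C, hC⟩ := exists_forall_letter_le S fun s => (f s).natAbs
  obtain ⟨D, hD⟩ := exists_forall_letter_le S Cβ
  refine ⟨C + D, wordNorm_induction hS (P := fun g n => (f g).natAbs ≤ (C + D) * n ^ 2)
    (by simp [hone]) fun s g n hs hg ih => ?_⟩
  have hβ_le : (β s g).natAbs ≤ D * n := (hCβ s g).trans (Nat.mul_le_mul (hD s hs) hg)
  calc (f (s * g)).natAbs ≤ (f s).natAbs + (f g).natAbs + (β s g).natAbs := by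
        rw [hf]; lia
    _ ≤ C + (C + D) * n ^ 2 + D * n := Nat.add_le_add (Nat.add_le_add (hC s hs) ih) hβ_le
    _ ≤ (C + D) * (n + 1) ^ 2 := by nlinarith

lemma wordNorm_map (e : G ≃* H) (g : G) :
    wordNorm (S.map e.toEquiv.toEmbedding) (e g) = wordNorm S g := by
  refine congrArg sInf (Set.ext fun n => ?_)
  have hletter (x : G) : e x ∈ S.map e.toEquiv.toEmbedding ∨ (e x)⁻¹ ∈ S.map e.toEquiv.toEmbedding ↔
      x ∈ S ∨ x⁻¹ ∈ S := by
    rw [← map_inv]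
    exact or_congr (Finset.mem_map' _) (Finset.mem_map' _)
  constructor
  · rintro ⟨l, hn, hl, hlg⟩
    refine ⟨l.map e.symm, by simpa, fun x hx => (hletter x).1 (hl _ ?_), e.injective ?_⟩
    · obtain ⟨y, hy, rfl⟩ := List.mem_map.1 hx
      simpa using hy
    · simpa [map_list_prod, Function.comp_def] using hlg
  · rintro ⟨l, hn, hl, rfl⟩
    refine ⟨l.map e, by simpa, fun y hy => ?_, (map_list_prod e l).symm⟩
    obtain ⟨x, hx, rfl⟩ := List.mem_map.1 hy
    exact (hletter x).2 (hl x hx)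

end WordNorm

section TwistedGrowth

variable {G H : Type*} [Group G] [Group H]

lemma twistedConj_conj_iff (e : G ≃* H) (ψ : H ≃* H) (x y : G) :
    TwistedConj (e.trans (ψ.trans e.symm)) x y ↔ TwistedConj ψ (e x) (e y) := by
  unfold TwistedConj
  rw [e.surjective.exists]
  refine exists_congr fun g => ?_
  rw [← e.injective.eq_iff]
  simp

lemma twistedGrowth_conj (e : G ≃* H) (ψ : H ≃* H) (S : Finset G) (n : ℕ) :
    twistedGrowth (e.trans (ψ.trans e.symm)) S n =
      twistedGrowth ψ (S.map e.toEquiv.toEmbedding) n := by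
  have hclass (x : G) : {y | TwistedConj ψ (e x) y} =
      e '' {y | TwistedConj (e.trans (ψ.trans e.symm)) x y} := by
    ext y
    obtain ⟨y, rfl⟩ := e.surjective y
    simp [twistedConj_conj_iff, e.injective.mem_set_image]
  have hball : {h | wordNorm (S.map e.toEquiv.toEmbedding) h ≤ n} =
      e '' {g | wordNorm S g ≤ n} := by
    ext h
    obtain ⟨h, rfl⟩ := e.surjective h
    rw [e.injective.mem_set_image, Set.mem_ofPred_eq, Set.mem_ofPred_eq, wordNorm_map]
  unfold twistedGrowth
  rw [hball, Set.image_image]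
  simp only [hclass]
  rw [← Set.image_image (fun A => e '' A),
    Set.ncard_image_of_injective _ (Set.image_injective.2 e.injective)]

lemma twistedGrowth_eq_ncard_image {α : Type*} {ψ : G ≃* G} {J : G → α}
    (hJ : ∀ x y, TwistedConj ψ x y ↔ J x = J y) (S : Finset G) (n : ℕ) :
    twistedGrowth ψ S n = (J '' {g | wordNorm S g ≤ n}).ncard := by
  have hclass (x : G) : {y | TwistedConj ψ x y} = J ⁻¹' {J x} := by
    ext y
    simp [hJ, eq_comm]
  simp only [twistedGrowth, hclass]
  rw [← Set.image_image (fun a => J ⁻¹' {a})]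
  refine Set.InjOn.ncard_image ?_
  rintro _ ⟨x, -, rfl⟩ _ ⟨y, -, rfl⟩ hxy
  exact (Set.ext_iff.1 hxy x).1 rfl

end TwistedGrowth

lemma gcd_dvd_iff_exists_mul_sub_mul {p q n : ℤ} :
    (Int.gcd p q : ℤ) ∣ n ↔ ∃ a b : ℤ, n = a * q - b * p := by
  constructor
  · rintro ⟨k, rfl⟩
    refine ⟨Int.gcdB p q * k, -Int.gcdA p q * k, ?_⟩
    rw [Int.gcd_eq_gcd_ab]
    ring
  · rintro ⟨a, b, rfl⟩
    exact dvd_sub ((Int.gcd_dvd_right ..).mul_left a) ((Int.gcd_dvd_left ..).mul_left b)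

/-- The central extension of `ℤ ⊕ ℤ ⊕ W` by `ℤ` with cocycle `d * p * q' + B w w'`. Every
generalised Heisenberg group has this shape. -/
@[ext]
structure SplitHeisenberg {W : Type*} [AddCommGroup W] (d : ℕ) (B : W →ₗ[ℤ] W →ₗ[ℤ] ℤ) where
  p : ℤ
  q : ℤ
  w : W
  c : ℤ

namespace SplitHeisenberg

variable {W : Type*} [AddCommGroup W] {d : ℕ} {B : W →ₗ[ℤ] W →ₗ[ℤ] ℤ}

instance : One (SplitHeisenberg d B) := ⟨⟨0, 0, 0, 0⟩⟩

instance : Mul (SplitHeisenberg d B) :=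
  ⟨fun g h => ⟨g.p + h.p, g.q + h.q, g.w + h.w, g.c + h.c + d * (g.p * h.q) + B g.w h.w⟩⟩

instance : Inv (SplitHeisenberg d B) :=
  ⟨fun g => ⟨-g.p, -g.q, -g.w, -g.c + d * (g.p * g.q) + B g.w g.w⟩⟩

@[simp] lemma one_p : (1 : SplitHeisenberg d B).p = 0 := rfl
@[simp] lemma one_q : (1 : SplitHeisenberg d B).q = 0 := rfl
@[simp] lemma one_w : (1 : SplitHeisenberg d B).w = 0 := rfl
@[simp] lemma one_c : (1 : SplitHeisenberg d B).c = 0 := rfl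

@[simp] lemma mul_p (g h : SplitHeisenberg d B) : (g * h).p = g.p + h.p := rfl
@[simp] lemma mul_q (g h : SplitHeisenberg d B) : (g * h).q = g.q + h.q := rfl
@[simp] lemma mul_w (g h : SplitHeisenberg d B) : (g * h).w = g.w + h.w := rfl
@[simp] lemma mul_c (g h : SplitHeisenberg d B) :
    (g * h).c = g.c + h.c + d * (g.p * h.q) + B g.w h.w := rfl

@[simp] lemma inv_p (g : SplitHeisenberg d B) : g⁻¹.p = -g.p := rfl
@[simp] lemma inv_q (g : SplitHeisenberg d B) : g⁻¹.q = -g.q := rfl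
@[simp] lemma inv_w (g : SplitHeisenberg d B) : g⁻¹.w = -g.w := rfl
@[simp] lemma inv_c (g : SplitHeisenberg d B) :
    g⁻¹.c = -g.c + d * (g.p * g.q) + B g.w g.w := rfl

instance : Group (SplitHeisenberg d B) := Group.ofLeftAxioms
  (fun g h k => by ext <;> simp [add_assoc]; ring)
  (fun g => by ext <;> simp)
  (fun g => by ext <;> simp; ring)

/-- The automorphism negating the `W`-coordinate; its twisted conjugacy classes are the object of
study. -/
def flip : SplitHeisenberg d B ≃* SplitHeisenberg d B where
  toFun g := ⟨g.p, g.q, -g.w, g.c⟩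
  invFun g := ⟨g.p, g.q, -g.w, g.c⟩
  left_inv g := by simp
  right_inv g := by simp
  map_mul' g h := by ext <;> simp [add_comm]

@[simp] lemma flip_apply (g : SplitHeisenberg d B) : flip g = ⟨g.p, g.q, -g.w, g.c⟩ := rfl

/-- The central coordinate, doubled and corrected by the quadratic form of `B`, so that twisted
conjugation by elements of `W` leaves it unchanged. -/
def height (g : SplitHeisenberg d B) : ℤ := 2 * g.c - B g.w g.w

lemma height_mul (g h : SplitHeisenberg d B) :
    (g * h).height = g.height + h.height + (2 * d * (g.p * h.q) + (B g.w h.w - B h.w g.w)) := by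
  simp only [height, mul_c, mul_w, map_add, LinearMap.add_apply]
  ring

/-- A complete invariant of twisted conjugacy under `flip`. -/
def flipInvariant (g : SplitHeisenberg d B) : (ℤ × ℤ) × ModN W 2 × ℤ :=
  ((g.p, g.q), ModN.mkQ 2 g.w, g.height % (2 * d * Int.gcd g.p g.q))

lemma twistedConj_flip_iff_exists (x y : SplitHeisenberg d B) :
    TwistedConj flip x y ↔ x.p = y.p ∧ x.q = y.q ∧ (∃ v, y.w = x.w + (2 : ℤ) • v) ∧
      ∃ a b : ℤ, y.height - x.height = 2 * d * (a * x.q - b * x.p) := by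
  simp only [TwistedConj, mul_inv_eq_iff_eq_mul]
  constructor
  · rintro ⟨g, hg⟩
    obtain ⟨hp, hq, hw, hc⟩ := SplitHeisenberg.ext_iff.1 hg
    simp only [mul_p, mul_q, mul_w, mul_c, flip_apply] at hp hq hw hc
    have hp' : x.p = y.p := by lia
    have hw' : y.w = x.w + (2 : ℤ) • g.w := by
      linear_combination (norm := module) (-1 : ℤ) • hw
    refine ⟨hp', by lia, ⟨g.w, hw'⟩, g.p, g.q, ?_⟩
    simp only [hw', hp', map_neg, map_add, map_smul, LinearMap.add_apply, LinearMap.smul_apply,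
      smul_eq_mul, height] at hc ⊢
    linear_combination -2 * hc
  · rintro ⟨hp, hq, ⟨v, hw⟩, a, b, hheight⟩
    refine ⟨⟨a, b, v, 0⟩, ?_⟩
    simp only [height, hw, map_add, map_smul, LinearMap.add_apply, LinearMap.smul_apply,
      smul_eq_mul] at hheight
    ext
    · simp [hp, add_comm]
    · simp [hq, add_comm]
    · simp only [mul_w, flip_apply, hw]
      module
    · simp only [mul_c, flip_apply, hw, ← hp, map_neg, map_add, map_smul, LinearMap.add_apply,
        LinearMap.smul_apply, smul_eq_mul]
      linarith

lemma twistedConj_flip_iff (x y : SplitHeisenberg d B) :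
    TwistedConj flip x y ↔ x.flipInvariant = y.flipInvariant := by
  have hmkQ : ModN.mkQ 2 x.w = ModN.mkQ 2 y.w ↔ ∃ v, y.w = x.w + (2 : ℤ) • v := by
    rw [eq_comm]
    refine (Submodule.Quotient.eq _).trans ?_
    simp [sub_eq_iff_eq_add', eq_comm]
  have hheight : x.height % (2 * d * Int.gcd x.p x.q) = y.height % (2 * d * Int.gcd x.p x.q) ↔
      ∃ a b : ℤ, y.height - x.height = 2 * d * (a * x.q - b * x.p) := by
    refine Int.modEq_iff_dvd.trans ?_
    constructor
    · rintro ⟨k, hk⟩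
      obtain ⟨a, b, hab⟩ := gcd_dvd_iff_exists_mul_sub_mul.1 (Dvd.intro k rfl)
      exact ⟨a, b, by rw [hk, mul_assoc, hab]⟩
    · rintro ⟨a, b, hab⟩
      rw [hab]
      exact mul_dvd_mul_left _ (gcd_dvd_iff_exists_mul_sub_mul.2 ⟨a, b, rfl⟩)
  simp only [twistedConj_flip_iff_exists, flipInvariant, Prod.mk.injEq, and_assoc, ← hmkQ,
    ← hheight]
  refine and_congr_right fun hp => and_congr_right fun hq => ?_
  rw [hp, hq]

section UpperBound

open Finset

/-- The values `flipInvariant` can take on elements with `|p|, |q| ≤ N` and `|height| ≤ M`. The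
height is only reduced modulo a positive number when `(p, q) ≠ 0`. -/
noncomputable def invariantBox (W : Type*) [AddCommGroup W] [Fintype (ModN W 2)] (d N M : ℕ) :
    Finset ((ℤ × ℤ) × ModN W 2 × ℤ) :=
  open scoped Classical in
  (Icc (-N : ℤ) N ×ˢ Icc (-N : ℤ) N).biUnion fun x => {x} ×ˢ univ ×ˢ
    if x = 0 then Icc (-M : ℤ) M else Ico 0 (2 * d * Int.gcd x.1 x.2 : ℤ)

lemma card_invariantBox_le [Fintype (ModN W 2)] (d N M : ℕ) :
    #(invariantBox W d N M) ≤ Fintype.card (ModN W 2) * (2 * d * gcdSum N + (2 * M + 1)) := by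
  classical
  refine card_biUnion_le.trans ?_
  simp only [card_product, card_singleton, one_mul, card_univ, ← mul_sum]
  gcongr
  calc ∑ x ∈ Icc (-N : ℤ) N ×ˢ Icc (-N : ℤ) N,
        #(if x = 0 then Icc (-M : ℤ) M else Ico 0 (2 * d * Int.gcd x.1 x.2 : ℤ))
      ≤ ∑ x ∈ Icc (-N : ℤ) N ×ˢ Icc (-N : ℤ) N,
        (2 * d * Int.gcd x.1 x.2 + if x = 0 then 2 * M + 1 else 0) := by
        gcongr with x
        split_ifs
        · rw [Int.card_Icc]
          lia
        · simp
    _ = 2 * d * gcdSum N + (2 * M + 1) := by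
        rw [sum_add_distrib, ← mul_sum, sum_ite_eq_of_mem' _ _ _ (by simp)]
        rfl

lemma flipInvariant_mem_invariantBox [Fintype (ModN W 2)] (hd : 0 < d) {N M : ℕ}
    {g : SplitHeisenberg d B} (hp : g.p.natAbs ≤ N) (hq : g.q.natAbs ≤ N)
    (hheight : g.height.natAbs ≤ M) : g.flipInvariant ∈ invariantBox W d N M := by
  classical
  simp only [invariantBox, mem_biUnion, mem_product, mem_Icc]
  refine ⟨(g.p, g.q), by lia, by simp [flipInvariant], mem_univ _, ?_⟩
  by_cases hpq : (g.p, g.q) = 0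
  · obtain ⟨hp0, hq0⟩ := Prod.mk_eq_zero.1 hpq
    simp only [flipInvariant, hp0, hq0, Prod.mk_zero_zero, if_true, Int.gcd_self, mem_Icc,
      Int.natAbs_zero, Nat.cast_zero, mul_zero, Int.emod_zero]
    lia
  · have hgcd : Int.gcd g.p g.q ≠ 0 := by simpa [Int.gcd_eq_zero_iff] using hpq
    have hpos : (0 : ℤ) < 2 * d * Int.gcd g.p g.q := by positivity
    rw [if_neg hpq, mem_Ico]
    exact ⟨Int.emod_nonneg _ hpos.ne', Int.emod_lt_of_pos _ hpos⟩

lemma exists_flipInvariant_image_subset [Fintype (ModN W 2)] (hd : 0 < d)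
    {S : Finset (SplitHeisenberg d B)} (hS : Subgroup.closure (S : Set (SplitHeisenberg d B)) = ⊤) :
    ∃ C : ℕ, ∀ n, flipInvariant '' {g | wordNorm S g ≤ n} ⊆
      (invariantBox W d (C * n) (C * n ^ 2) : Set ((ℤ × ℤ) × ModN W 2 × ℤ)) := by
  obtain ⟨Cp, hCp⟩ := exists_natAbs_le_mul_wordNorm hS mul_p
  obtain ⟨Cq, hCq⟩ := exists_natAbs_le_mul_wordNorm hS mul_q
  obtain ⟨Ch, hCh⟩ := exists_natAbs_le_mul_wordNorm_sq hS height_mul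
    (fun g h h' => by simp; ring) (by simp [height])
  refine ⟨Cp + Cq + Ch, fun n => ?_⟩
  rintro _ ⟨g, hg, rfl⟩
  rw [Set.mem_ofPred_eq] at hg
  refine flipInvariant_mem_invariantBox hd ((hCp g).trans ?_) ((hCq g).trans ?_)
    ((hCh g).trans ?_)
  all_goals gcongr; lia

lemma exists_twistedGrowth_flip_le_gcdSum [Finite (ModN W 2)] (hd : 0 < d)
    {S : Finset (SplitHeisenberg d B)} (hS : Subgroup.closure (S : Set (SplitHeisenberg d B)) = ⊤) :
    ∃ K C : ℕ, ∀ n, twistedGrowth flip S n ≤ K * (gcdSum (C * n) + (n + 1) ^ 2) := by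
  have := Fintype.ofFinite (ModN W 2)
  obtain ⟨C, hC⟩ := exists_flipInvariant_image_subset hd hS
  refine ⟨Fintype.card (ModN W 2) * (2 * d + 2 * C + 1), C, fun n => ?_⟩
  calc twistedGrowth flip S n = (flipInvariant '' {g | wordNorm S g ≤ n}).ncard :=
        twistedGrowth_eq_ncard_image twistedConj_flip_iff S n
    _ ≤ #(invariantBox W d (C * n) (C * n ^ 2)) :=
        Set.ncard_coe_finset (invariantBox W d (C * n) (C * n ^ 2)) ▸
          Set.ncard_le_ncard (hC n) (finite_toSet _)
    _ ≤ Fintype.card (ModN W 2) * (2 * d * gcdSum (C * n) + (2 * (C * n ^ 2) + 1)) :=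
        card_invariantBox_le ..
    _ ≤ _ := by
        rw [mul_assoc (Fintype.card _)]
        gcongr
        nlinarith [Nat.zero_le (C * gcdSum (C * n)), Nat.zero_le (d * (n + 1) ^ 2),
          Nat.zero_le (C * n)]

end UpperBound

section LowerBound

open Finset

lemma mk_zpow {p q : ℤ} (hpq : p * q = 0) (c n : ℤ) :
    (⟨p, q, 0, c⟩ : SplitHeisenberg d B) ^ n = ⟨n * p, n * q, 0, n * c⟩ := by
  induction n using Int.induction_on with
  | zero => ext <;> simp
  | succ n ih =>
    rw [zpow_add_one, ih]
    ext <;> simp <;> grind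
  | pred n ih =>
    rw [zpow_sub_one, ih]
    ext <;> simp <;> grind

lemma mk_eq_mul_zpow (p q c : ℤ) :
    (⟨p, q, 0, c⟩ : SplitHeisenberg d B) =
      ⟨0, 1, 0, 0⟩ ^ q * ⟨1, 0, 0, 0⟩ ^ p * ⟨0, 0, 0, 1⟩ ^ c := by
  rw [mk_zpow (by simp), mk_zpow (by simp), mk_zpow (by simp)]
  ext <;> simp

lemma exists_wordNorm_mk_le {S : Finset (SplitHeisenberg d B)}
    (hS : Subgroup.closure (S : Set (SplitHeisenberg d B)) = ⊤) :
    ∃ D > 0, ∀ (N : ℕ) (p q c : ℤ), p.natAbs ≤ N → q.natAbs ≤ N → c.natAbs ≤ N →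
      wordNorm S ⟨p, q, 0, c⟩ ≤ D * N := by
  refine ⟨wordNorm S ⟨0, 1, 0, 0⟩ + wordNorm S ⟨1, 0, 0, 0⟩ + wordNorm S ⟨0, 0, 0, 1⟩ + 1,
    by lia, fun N p q c hp hq hc => ?_⟩
  rw [mk_eq_mul_zpow]
  have hle (g : SplitHeisenberg d B) {n : ℤ} (hn : n.natAbs ≤ N) :
      wordNorm S (g ^ n) ≤ N * wordNorm S g :=
    (wordNorm_zpow_le hS g n).trans (Nat.mul_le_mul_right _ hn)
  have hmul := wordNorm_mul_le hS
    (⟨0, 1, 0, 0⟩ ^ q * ⟨1, 0, 0, 0⟩ ^ p : SplitHeisenberg d B) (⟨0, 0, 0, 1⟩ ^ c)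
  have hmul' := wordNorm_mul_le hS (⟨0, 1, 0, 0⟩ ^ q : SplitHeisenberg d B) (⟨1, 0, 0, 0⟩ ^ p)
  linarith [hle ⟨0, 1, 0, 0⟩ hq, hle ⟨1, 0, 0, 0⟩ hp, hle ⟨0, 0, 0, 1⟩ hc]

lemma flipInvariant_mk {p q : ℤ} {k : ℕ} (hd : 0 < d) (hk : k < Int.gcd p q) :
    (⟨p, q, 0, k⟩ : SplitHeisenberg d B).flipInvariant = ((p, q), 0, 2 * (k : ℤ)) := by
  have hlt : (2 * k : ℤ) < 2 * d * Int.gcd p q := by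
    norm_cast
    nlinarith
  simp [flipInvariant, height, Int.emod_eq_of_lt (by positivity) hlt]

lemma exists_gcdSum_le_twistedGrowth_flip [Finite (ModN W 2)] (hd : 0 < d)
    {S : Finset (SplitHeisenberg d B)} (hS : Subgroup.closure (S : Set (SplitHeisenberg d B)) = ⊤) :
    ∃ D > 0, ∀ N n, D * N ≤ n → gcdSum N ≤ twistedGrowth flip S n := by
  have := Fintype.ofFinite (ModN W 2)
  obtain ⟨D, hD, hnorm⟩ := exists_wordNorm_mk_le hS
  obtain ⟨C, hC⟩ := exists_flipInvariant_image_subset hd hS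
  refine ⟨D, hD, fun N n hn => ?_⟩
  let points := (Icc (-N : ℤ) N ×ˢ Icc (-N : ℤ) N).sigma fun x => range (Int.gcd x.1 x.2)
  let invariant (x : (_ : ℤ × ℤ) × ℕ) : (ℤ × ℤ) × ModN W 2 × ℤ := (x.1, 0, 2 * (x.2 : ℤ))
  have hinj : Function.Injective invariant := by
    rintro ⟨x, k⟩ ⟨y, l⟩ h
    simp_all [invariant]
  have hsubset : invariant '' points ⊆ flipInvariant '' {g | wordNorm S g ≤ n} := by
    rintro _ ⟨⟨⟨p, q⟩, k⟩, hx, rfl⟩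
    simp only [points, mem_coe, mem_sigma, mem_product, mem_range] at hx
    obtain ⟨⟨hp, hq⟩, hk⟩ := hx
    have hgcd : Int.gcd p q ≤ N := gcd_le_of_mem_Icc_neg hp hq
    rw [mem_Icc] at hp hq
    exact ⟨⟨p, q, 0, k⟩, (hnorm N p q k (by lia) (by lia) (by lia)).trans hn,
      flipInvariant_mk hd hk⟩
  calc gcdSum N = #points := by simp [points, gcdSum]
    _ = (invariant '' points).ncard := by
        rw [Set.ncard_image_of_injective _ hinj, Set.ncard_coe_finset]
    _ ≤ (flipInvariant '' {g | wordNorm S g ≤ n}).ncard :=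
        Set.ncard_le_ncard hsubset ((finite_toSet _).subset (hC n))
    _ = twistedGrowth flip S n := (twistedGrowth_eq_ncard_image twistedConj_flip_iff S n).symm

end LowerBound

theorem transcendental_twistedGrowth_flip [Finite (ModN W 2)] (hd : 0 < d)
    {S : Finset (SplitHeisenberg d B)} (hS : Subgroup.closure (S : Set (SplitHeisenberg d B)) = ⊤) :
    Transcendental ℚ[X]
      (PowerSeries.mk fun n => (twistedGrowth (flip (d := d) (B := B)) S n : ℚ)) := by
  obtain ⟨D, hD, hlower⟩ := exists_gcdSum_le_twistedGrowth_flip hd hS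
  obtain ⟨K, C, hupper⟩ := exists_twistedGrowth_flip_le_gcdSum hd hS
  exact transcendental_of_gcdSum_le_of_le_gcdSum hD hlower hupper

end SplitHeisenberg

section AlternatingForm

variable {R V : Type*} [CommRing R] [AddCommGroup V] [Module R V]

lemma exists_sub_swap_eq_of_isAlt [Module.Free R V] {ω : V →ₗ[R] V →ₗ[R] R} (hω : ω.IsAlt) :
    ∃ B : V →ₗ[R] V →ₗ[R] R, ∀ x y, B x y - B y x = ω x y := by
  classical
  let b := Module.Free.chooseBasis R V
  let : LinearOrder (Module.Free.ChooseBasisIndex R V) := linearOrderOfSTO WellOrderingRel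
  let B := b.constr R fun i => b.constr R fun j => if i < j then ω (b i) (b j) else 0
  suffices B - B.flip = ω from ⟨B, fun x y => by simp [← this]⟩
  refine LinearMap.ext_basis b b fun i j => ?_
  simp only [B, LinearMap.sub_apply, LinearMap.flip_apply, Module.Basis.constr_basis]
  rcases lt_trichotomy i j with hij | rfl | hij
  · simp [hij, hij.not_gt]
  · simp [hω.self_eq_zero]
  · simp [hij, hij.not_gt, hω.neg]

/-- Splitting off the span of `u` and `v`, where `(p, q)` are coordinates dual to `(u, v)`. -/
def equivProdKer (p q : V →ₗ[R] R) {u v : V} (hpu : p u = 1) (hpv : p v = 0) (hqu : q u = 0)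
    (hqv : q v = 1) : V ≃ₗ[R] R × R × (LinearMap.ker p ⊓ LinearMap.ker q : Submodule R V) where
  toFun x := (p x, q x, ⟨x - p x • u - q x • v, by simp [hpu, hpv, hqu, hqv]⟩)
  invFun x := x.1 • u + x.2.1 • v + x.2.2
  map_add' x y := by
    ext
    · simp
    · simp
    · simp only [map_add, Prod.snd_add, Submodule.coe_add]
      module
  map_smul' r x := by
    ext
    · simp
    · simp
    · simp only [map_smul, smul_eq_mul, RingHom.id_apply, Prod.smul_snd, Submodule.coe_smul]
      module
  left_inv x := by
    simp only
    module
  right_inv x := by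
    obtain ⟨a, b, w, hpw, hqw⟩ := x
    simp only [SetLike.mem_coe, LinearMap.mem_ker] at hpw hqw
    ext
    · simp [hpu, hpv, hpw]
    · simp [hqu, hqv, hqw]
    · simp only [map_add, map_smul, hpu, hpv, hpw, hqu, hqv, hqw, smul_eq_mul]
      module

lemma apply_eq_equivProdKer {ω : V →ₗ[R] V →ₗ[R] R} (hω : ω.IsAlt) {p q : V →ₗ[R] R} {u v : V}
    {d : R} (hpu : p u = 1) (hpv : p v = 0) (hqu : q u = 0) (hqv : q v = 1)
    (hp : ∀ x, ω x v = d * p x) (hq : ∀ x, ω u x = d * q x) (x y : V) :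
    letI e := equivProdKer p q hpu hpv hqu hqv
    ω x y = d * ((e x).1 * (e y).2.1 - (e y).1 * (e x).2.1) + ω (e x).2.2 (e y).2.2 := by
  have hp' (x : V) : ω v x = -(d * p x) := by rw [← hp, hω.neg]
  have hq' (x : V) : ω x u = -(d * q x) := by rw [← hq, hω.neg]
  simp only [equivProdKer, LinearEquiv.coe_mk, LinearMap.coe_mk, AddHom.coe_mk, map_sub, map_smul,
    LinearMap.sub_apply, LinearMap.smul_apply, smul_eq_mul, hp, hq, hp', hq', hpu, hpv, hqu]
  ring

lemma exists_eq_mul_of_forall_dvd [NoZeroDivisors R] {d : R} (hd : d ≠ 0) {f : V →ₗ[R] R}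
    (hf : ∀ x, d ∣ f x) : ∃ g : V →ₗ[R] R, ∀ x, f x = d * g x := by
  choose g hg using hf
  refine ⟨{ toFun := g, map_add' := fun x y => ?_, map_smul' := fun r x => ?_ }, hg⟩
  · apply mul_left_cancel₀ hd
    rw [mul_add, ← hg, ← hg, ← hg, map_add]
  · apply mul_left_cancel₀ hd
    rw [← hg, map_smul, hg, RingHom.id_apply, smul_eq_mul, smul_eq_mul, mul_left_comm]

end AlternatingForm

section IntAlternatingForm

variable {V : Type*} [AddCommGroup V] {ω : V →ₗ[ℤ] V →ₗ[ℤ] ℤ}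

-- The least positive value of `ω` divides every value it takes with one argument of a minimising
-- pair, by Euclidean division.
lemma exists_forall_dvd_apply (hne : ω ≠ 0) :
    ∃ d : ℕ, 0 < d ∧ ∃ u v, ω u v = d ∧ (∀ x, (d : ℤ) ∣ ω x v) ∧ ∀ x, (d : ℤ) ∣ ω u x := by
  obtain ⟨x, y, hxy⟩ : ∃ x y, ω x y ≠ 0 := by
    simpa [LinearMap.ext_iff] using hne
  have hex : ∃ d : ℕ, 0 < d ∧ ∃ u v, ω u v = d := by
    rcases lt_or_gt_of_ne hxy with h | h
    · exact ⟨(ω x y).natAbs, by lia, -x, y, by rw [map_neg, LinearMap.neg_apply]; lia⟩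
    · exact ⟨(ω x y).natAbs, by lia, x, y, by lia⟩
  classical
  obtain ⟨hd, u, v, huv⟩ := Nat.find_spec hex
  set d := Nat.find hex
  have hmin (x y : V) (hnonneg : 0 ≤ ω x y) (hlt : ω x y < d) : ω x y = 0 := by
    by_contra hxy
    exact Nat.find_min hex (m := (ω x y).natAbs) (by lia) ⟨by lia, x, y, by lia⟩
  have hmod (a : ℤ) : 0 ≤ a % d ∧ a % d < d :=
    ⟨Int.emod_nonneg _ (by lia), Int.emod_lt_of_pos _ (by lia)⟩
  refine ⟨d, hd, u, v, huv, fun x => ?_, fun x => ?_⟩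
  · have hrem : ω (x - (ω x v / d) • u) v = ω x v % d := by
      simp [huv, Int.emod_def, mul_comm]
    have := hmin _ _ (hrem ▸ (hmod _).1) (hrem ▸ (hmod _).2)
    exact Int.dvd_of_emod_eq_zero (hrem ▸ this)
  · have hrem : ω u (x - (ω u x / d) • v) = ω u x % d := by
      simp [huv, Int.emod_def, mul_comm]
    have := hmin _ _ (hrem ▸ (hmod _).1) (hrem ▸ (hmod _).2)
    exact Int.dvd_of_emod_eq_zero (hrem ▸ this)

theorem exists_equiv_prod_of_isAlt (hω : ω.IsAlt) (hne : ω ≠ 0) :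
    ∃ d : ℕ, 0 < d ∧ ∃ (W : Submodule ℤ V) (e : V ≃ₗ[ℤ] ℤ × ℤ × W), ∀ x y,
      ω x y = d * ((e x).1 * (e y).2.1 - (e y).1 * (e x).2.1) + ω (e x).2.2 (e y).2.2 := by
  obtain ⟨d, hd, u, v, huv, hdvd_left, hdvd_right⟩ := exists_forall_dvd_apply hne
  have hd' : (d : ℤ) ≠ 0 := mod_cast hd.ne'
  obtain ⟨p, hp⟩ := exists_eq_mul_of_forall_dvd (f := ω.flip v) hd' hdvd_left
  obtain ⟨q, hq⟩ := exists_eq_mul_of_forall_dvd (f := ω u) hd' hdvd_right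
  have hpu : p u = 1 := mul_left_cancel₀ hd' (by rw [← hp, LinearMap.flip_apply, huv, mul_one])
  have hpv : p v = 0 := by simpa [hω.self_eq_zero, hd.ne'] using hp v
  have hqu : q u = 0 := by simpa [hω.self_eq_zero, hd.ne'] using hq u
  have hqv : q v = 1 := mul_left_cancel₀ hd' (by rw [← hq, huv, mul_one])
  exact ⟨d, hd, _, equivProdKer p q hpu hpv hqu hqv,
    apply_eq_equivProdKer hω hpu hpv hqu hqv hp hq⟩

end IntAlternatingForm

/-- A central extension `0 → A → G → V → 0` of the abelian group `V` by `A`, both written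
additively. -/
structure CentralExtension (A G V : Type*) [AddCommGroup A] [Group G] [AddCommGroup V] extends
    GroupExtension (Multiplicative A) G (Multiplicative V) where
  inl_mem_center : ∀ a, inl a ∈ Subgroup.center G

namespace CentralExtension

open Multiplicative

variable {A G V : Type*} [AddCommGroup A] [Group G] [AddCommGroup V] (E : CentralExtension A G V)

/-- The inclusion of the kernel, from the additive group `A`. -/
def incl (a : A) : G := E.inl (ofAdd a)

/-- The projection onto the quotient, to the additive group `V`. -/
def proj (g : G) : V := toAdd (E.rightHom g)

@[simp] lemma incl_zero : E.incl 0 = 1 := map_one E.inl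

lemma incl_add (a b : A) : E.incl (a + b) = E.incl a * E.incl b := map_mul E.inl _ _

lemma incl_injective : Function.Injective E.incl := E.inl_injective

lemma incl_mul_comm (a : A) (g : G) : E.incl a * g = g * E.incl a :=
  (Subgroup.mem_center_iff.1 (E.inl_mem_center _) g).symm

@[simp] lemma proj_one : E.proj 1 = 0 := map_one E.rightHom

@[simp] lemma proj_mul (g h : G) : E.proj (g * h) = E.proj g + E.proj h := map_mul E.rightHom g h

@[simp] lemma proj_inv (g : G) : E.proj g⁻¹ = -E.proj g := map_inv E.rightHom g

@[simp] lemma proj_incl (a : A) : E.proj (E.incl a) = 0 := E.rightHom_inl _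

lemma proj_surjective : Function.Surjective E.proj := E.rightHom_surjective

lemma exists_eq_mul_incl_of_proj_eq {g h : G} (hgh : E.proj g = E.proj h) :
    ∃ a, g = h * E.incl a := by
  have hker : h⁻¹ * g ∈ E.rightHom.ker := show E.proj (h⁻¹ * g) = 0 by simp [hgh]
  rw [← E.range_inl_eq_ker_rightHom] at hker
  obtain ⟨a, ha⟩ := hker
  exact ⟨a.toAdd, eq_mul_of_inv_mul_eq ha.symm⟩

lemma exists_mul_eq_swap_mul_incl (g h : G) : ∃ a, g * h = h * g * E.incl a :=
  E.exists_eq_mul_incl_of_proj_eq (by simp [add_comm])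

/-- The commutator of `g` and `h`, as an element of the kernel. -/
noncomputable def comm (g h : G) : A := (E.exists_mul_eq_swap_mul_incl g h).choose

lemma mul_eq_swap_mul_incl_comm (g h : G) : g * h = h * g * E.incl (E.comm g h) :=
  (E.exists_mul_eq_swap_mul_incl g h).choose_spec

lemma comm_eq_of_mul_eq {g h : G} {a : A} (hgh : g * h = h * g * E.incl a) : E.comm g h = a :=
  E.incl_injective (mul_left_cancel ((E.mul_eq_swap_mul_incl_comm g h).symm.trans hgh))

lemma comm_mul_left (g g' h : G) : E.comm (g * g') h = E.comm g h + E.comm g' h := by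
  refine E.comm_eq_of_mul_eq ?_
  calc g * g' * h = g * h * g' * E.incl (E.comm g' h) := by
        rw [mul_assoc, E.mul_eq_swap_mul_incl_comm g' h]
        simp only [mul_assoc]
    _ = h * g * (E.incl (E.comm g h) * g') * E.incl (E.comm g' h) := by
        rw [E.mul_eq_swap_mul_incl_comm g h]
        simp only [mul_assoc]
    _ = h * (g * g') * E.incl (E.comm g h + E.comm g' h) := by
        rw [E.incl_mul_comm, E.incl_add]
        simp only [mul_assoc]

lemma comm_swap (g h : G) : E.comm h g = -E.comm g h := by
  refine E.comm_eq_of_mul_eq ?_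
  rw [E.mul_eq_swap_mul_incl_comm g h, mul_assoc, ← E.incl_add, add_neg_cancel, E.incl_zero,
    mul_one]

lemma comm_mul_right (g h h' : G) : E.comm g (h * h') = E.comm g h + E.comm g h' := by
  rw [E.comm_swap, E.comm_mul_left, E.comm_swap g h, E.comm_swap g h']
  abel

@[simp] lemma comm_incl_left (a : A) (h : G) : E.comm (E.incl a) h = 0 :=
  E.comm_eq_of_mul_eq (by simp [E.incl_mul_comm])

lemma comm_congr {g g' h h' : G} (hg : E.proj g = E.proj g') (hh : E.proj h = E.proj h') :
    E.comm g h = E.comm g' h' := by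
  obtain ⟨a, rfl⟩ := E.exists_eq_mul_incl_of_proj_eq hg
  obtain ⟨b, rfl⟩ := E.exists_eq_mul_incl_of_proj_eq hh
  simp [comm_mul_left, comm_mul_right, E.comm_swap (E.incl b)]

/-- The commutator pairing of a central extension, as a bilinear form on the quotient. -/
noncomputable def commForm : V →ₗ[ℤ] V →ₗ[ℤ] A :=
  (AddMonoidHom.mk' (fun x => (AddMonoidHom.mk'
    (fun y => E.comm (Function.surjInv E.proj_surjective x) (Function.surjInv E.proj_surjective y))
    fun y y' => by
      rw [← comm_mul_right]
      exact E.comm_congr rfl (by simp [Function.surjInv_eq])).toIntLinearMap)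
    fun x x' => by
      ext y
      simp only [AddMonoidHom.coe_toIntLinearMap, AddMonoidHom.mk'_apply, LinearMap.add_apply]
      rw [← comm_mul_left]
      exact E.comm_congr (by simp [Function.surjInv_eq]) rfl).toIntLinearMap

@[simp] lemma commForm_proj (g h : G) : E.commForm (E.proj g) (E.proj h) = E.comm g h :=
  E.comm_congr (Function.surjInv_eq _ _) (Function.surjInv_eq _ _)

lemma commForm_isAlt : E.commForm.IsAlt := fun x => by
  obtain ⟨g, rfl⟩ := E.proj_surjective x
  rw [commForm_proj]
  exact E.comm_eq_of_mul_eq (by simp)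

lemma commForm_ne_zero {g h : G} (hgh : g * h ≠ h * g) : E.commForm ≠ 0 := by
  intro hzero
  refine hgh ?_
  rw [E.mul_eq_swap_mul_incl_comm g h, ← commForm_proj, hzero]
  simp

section Section

variable (B : V →ₗ[ℤ] V →ₗ[ℤ] A)

/-- The multiplication of `G` with the cocycle `B` removed. It is commutative when `B`
antisymmetrises to the commutator form. -/
def untwistedAdd (g h : G) : G := g * h * E.incl (-B (E.proj g) (E.proj h))

@[simp] lemma proj_untwistedAdd (g h : G) :
    E.proj (E.untwistedAdd B g h) = E.proj g + E.proj h := by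
  simp [untwistedAdd]

lemma untwistedAdd_assoc (g h k : G) :
    E.untwistedAdd B (E.untwistedAdd B g h) k = E.untwistedAdd B g (E.untwistedAdd B h k) := by
  have hleft : E.untwistedAdd B (E.untwistedAdd B g h) k =
      g * h * k * E.incl (-B (E.proj g) (E.proj h) - B (E.proj g + E.proj h) (E.proj k)) := by
    rw [untwistedAdd, proj_untwistedAdd, untwistedAdd, mul_assoc (g * h), E.incl_mul_comm,
      sub_eq_add_neg, incl_add]
    simp only [mul_assoc]
  have hright : E.untwistedAdd B g (E.untwistedAdd B h k) =
      g * h * k * E.incl (-B (E.proj h) (E.proj k) - B (E.proj g) (E.proj h + E.proj k)) := by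
    rw [untwistedAdd, proj_untwistedAdd, untwistedAdd, sub_eq_add_neg, incl_add]
    simp only [mul_assoc]
  rw [hleft, hright]
  congr 2
  simp only [map_add, LinearMap.add_apply]
  abel

variable {B}

lemma untwistedAdd_comm (hB : ∀ x y, B x y - B y x = E.commForm x y) (g h : G) :
    E.untwistedAdd B g h = E.untwistedAdd B h g := by
  rw [untwistedAdd, untwistedAdd, E.mul_eq_swap_mul_incl_comm g h, mul_assoc, ← incl_add,
    ← commForm_proj, ← hB]
  congr 2
  abel

/-- Baer's trick: `untwistedAdd` makes `G` an abelian group, extending `V` by `A`. -/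
abbrev untwistedAddCommGroup (hB : ∀ x y, B x y - B y x = E.commForm x y) : AddCommGroup G :=
  letI : Add G := ⟨E.untwistedAdd B⟩
  letI : Zero G := ⟨1⟩
  letI : Neg G := ⟨fun g => g⁻¹ * E.incl (-B (E.proj g) (E.proj g))⟩
  { AddGroup.ofLeftAxioms (E.untwistedAdd_assoc B)
      (fun g => by
        change E.untwistedAdd B 1 g = g
        simp [untwistedAdd])
      (fun g => by
        change E.untwistedAdd B (g⁻¹ * E.incl (-B (E.proj g) (E.proj g))) g = 1
        rw [untwistedAdd, mul_assoc g⁻¹, E.incl_mul_comm, ← mul_assoc, mul_assoc, ← E.incl_add]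
        simp) with
    add_comm := E.untwistedAdd_comm hB }

theorem exists_section [Module.Projective ℤ V] (hB : ∀ x y, B x y - B y x = E.commForm x y) :
    ∃ s : V → G, (∀ x, E.proj (s x) = x) ∧ ∀ x y, s x * s y = s (x + y) * E.incl (B x y) := by
  let := E.untwistedAddCommGroup hB
  let projHom : G →ₗ[ℤ] V := (AddMonoidHom.mk' E.proj (E.proj_untwistedAdd B)).toIntLinearMap
  obtain ⟨s, hs⟩ := Module.projective_lifting_property projHom LinearMap.id E.proj_surjective
  have hproj (x : V) : E.proj (s x) = x := LinearMap.congr_fun hs x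
  refine ⟨s, hproj, fun x y => ?_⟩
  have hadd : s (x + y) = s x * s y * E.incl (-B x y) :=
    (map_add s x y).trans (show E.untwistedAdd B (s x) (s y) = _ by rw [untwistedAdd, hproj, hproj])
  rw [hadd, mul_assoc, ← incl_add, neg_add_cancel, incl_zero, mul_one]

lemma bijective_section_mul_incl {s : V → G} (hs : ∀ x, E.proj (s x) = x) :
    Function.Bijective fun x : V × A => s x.1 * E.incl x.2 := by
  constructor
  · rintro ⟨x, a⟩ ⟨y, b⟩ hxy
    obtain rfl : x = y := by simpa [hs] using congrArg E.proj hxy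
    exact Prod.ext rfl (E.incl_injective (mul_left_cancel hxy))
  · intro g
    obtain ⟨a, ha⟩ := E.exists_eq_mul_incl_of_proj_eq (hs (E.proj g)).symm
    exact ⟨(E.proj g, a), ha.symm⟩

end Section

section IntKernel

variable [Module.Free ℤ V]

lemma nonempty_mulEquiv_splitHeisenberg_of_equiv_prod {W : Type*} [AddCommGroup W]
    (E : CentralExtension ℤ G V) (e : V ≃ₗ[ℤ] ℤ × ℤ × W) {d : ℕ} {B : W →ₗ[ℤ] W →ₗ[ℤ] ℤ}
    (hB : ∀ x y, E.commForm x y = d * ((e x).1 * (e y).2.1 - (e y).1 * (e x).2.1) +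
      (B (e x).2.2 (e y).2.2 - B (e y).2.2 (e x).2.2)) :
    Nonempty (G ≃* SplitHeisenberg d B) := by
  let cocycle : V →ₗ[ℤ] V →ₗ[ℤ] ℤ := LinearMap.mk₂ ℤ
    (fun x y => d * ((e x).1 * (e y).2.1) + B (e x).2.2 (e y).2.2)
    (fun x y z => by simp; ring) (fun c x y => by simp; ring)
    (fun x y z => by simp; ring) (fun c x y => by simp; ring)
  obtain ⟨s, hs, hmul⟩ := E.exists_section (B := cocycle) fun x y => by simp [cocycle, hB]; ring
  let coords : SplitHeisenberg d B ≃ V × ℤ :=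
    { toFun := fun g => (e.symm (g.p, g.q, g.w), g.c)
      invFun := fun x => ⟨(e x.1).1, (e x.1).2.1, (e x.1).2.2, x.2⟩
      left_inv := fun g => by simp
      right_inv := fun x => by simp }
  refine ⟨.symm <| .mk' (coords.trans (.ofBijective _ (E.bijective_section_mul_incl hs)))
    fun g h => ?_⟩
  have hcocycle : cocycle (coords g).1 (coords h).1 = d * (g.p * h.q) + B g.w h.w := by
    simp [cocycle, coords]
  have hcoords : (coords (g * h)).1 = (coords g).1 + (coords h).1 := by
    simp [coords, ← map_add]
  change s (coords (g * h)).1 * E.incl (g * h).c =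
    s (coords g).1 * E.incl g.c * (s (coords h).1 * E.incl h.c)
  calc s (coords (g * h)).1 * E.incl (g * h).c
      = s ((coords g).1 + (coords h).1) * E.incl (cocycle (coords g).1 (coords h).1) *
          (E.incl g.c * E.incl h.c) := by
        rw [hcoords, hcocycle, mul_assoc, ← incl_add, ← incl_add, SplitHeisenberg.mul_c]
        congr 2
        ring
    _ = s (coords g).1 * (s (coords h).1 * E.incl g.c) * E.incl h.c := by
        rw [← hmul]
        simp only [mul_assoc]
    _ = s (coords g).1 * E.incl g.c * (s (coords h).1 * E.incl h.c) := by
        rw [← E.incl_mul_comm g.c]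
        simp only [mul_assoc]

theorem exists_mulEquiv_splitHeisenberg (E : CentralExtension ℤ G V)
    (hnc : ∃ g h : G, g * h ≠ h * g) :
    ∃ (W : Submodule ℤ V) (d : ℕ) (B : W →ₗ[ℤ] W →ₗ[ℤ] ℤ), 0 < d ∧
      Nonempty (G ≃* SplitHeisenberg d B) := by
  obtain ⟨g, h, hgh⟩ := hnc
  obtain ⟨d, hd, W, e, he⟩ := exists_equiv_prod_of_isAlt E.commForm_isAlt (E.commForm_ne_zero hgh)
  obtain ⟨B, hB⟩ := exists_sub_swap_eq_of_isAlt E.commForm_isAlt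
  refine ⟨W, d, B.domRestrict₁₂ W W, hd,
    E.nonempty_mulEquiv_splitHeisenberg_of_equiv_prod e fun x y => ?_⟩
  rw [he, LinearMap.domRestrict₁₂_apply, LinearMap.domRestrict₁₂_apply, hB]

end IntKernel

end CentralExtension

lemma closure_map_equiv_eq_top {G H : Type*} [Group G] [Group H] (e : G ≃* H) {S : Finset G}
    (hS : Subgroup.closure (S : Set G) = ⊤) :
    Subgroup.closure (S.map e.toEquiv.toEmbedding : Set H) = ⊤ := by
  rw [Finset.coe_map]
  exact (MonoidHom.map_closure e.toMonoidHom S).symm.trans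
    (hS ▸ Subgroup.map_top_of_surjective e.toMonoidHom e.surjective)

lemma SplitHeisenberg.exists_automorphism_transcendental_of_mulEquiv {G : Type*} [Group G]
    {W : Type*} [AddCommGroup W] [Finite (ModN W 2)] {d : ℕ} (hd : 0 < d)
    {B : W →ₗ[ℤ] W →ₗ[ℤ] ℤ} (e : G ≃* SplitHeisenberg d B) :
    ∃ ψ : G ≃* G, ∀ S : Finset G, Subgroup.closure (S : Set G) = ⊤ →
      Transcendental ℚ[X] (PowerSeries.mk fun n => (twistedGrowth ψ S n : ℚ)) := by
  refine ⟨e.trans (flip.trans e.symm), fun S hS => ?_⟩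
  simp only [twistedGrowth_conj]
  exact transcendental_twistedGrowth_flip hd (closure_map_equiv_eq_top e hS)

section Isolator

open scoped IsMulCommutative commutatorElement

variable {G : Type*} [Group G]

lemma mem_center_of_pow_mem_center (htf : ∀ (g : G) (n : ℕ), 0 < n → g ^ n = 1 → g = 1)
    (hcomm : commutator G ≤ Subgroup.center G) {g : G} {n : ℕ} (hn : 0 < n)
    (hg : g ^ n ∈ Subgroup.center G) : g ∈ Subgroup.center G := by
  refine Subgroup.mem_center_iff.2 fun h => commutatorElement_eq_one_iff_mul_comm.1 ?_
  have hcentral : ⁅h, g⁆ ∈ Subgroup.center G :=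
    hcomm (Subgroup.commutator_mem_commutator (Subgroup.mem_top h) (Subgroup.mem_top g))
  have hconj : h * g * h⁻¹ = ⁅h, g⁆ * g := by
    simp [commutatorElement_def]
  have hpow : ⁅h, g⁆ ^ n * g ^ n = g ^ n := by
    have hcommute : Commute ⁅h, g⁆ g := (Subgroup.mem_center_iff.1 hcentral g).symm
    rw [← hcommute.mul_pow, ← hconj, conj_pow, Subgroup.mem_center_iff.1 hg h,
      mul_inv_cancel_right]
  exact htf _ n hn (mul_eq_right.1 hpow)

variable {N : Subgroup G} [N.Normal]

/-- The extension of `G ⧸ N` by an infinite cyclic central subgroup `N`, identified with `ℤ` by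
the choice of a generator. -/
noncomputable def CentralExtension.ofQuotient [IsMulCommutative (G ⧸ N)] [IsCyclic N]
    [Infinite N] (hN : N ≤ Subgroup.center G) : CentralExtension ℤ G (Additive (G ⧸ N)) where
  inl := N.subtype.comp (intCyclicMulEquiv (G := N)).toMonoidHom
  rightHom := (MulEquiv.multiplicativeAdditive (G ⧸ N)).symm.toMonoidHom.comp (QuotientGroup.mk' N)
  inl_injective := N.subtype_injective.comp intCyclicMulEquiv.injective
  range_inl_eq_ker_rightHom := by
    rw [MonoidHom.range_comp,
      MonoidHom.range_eq_top_of_surjective (MulEquiv.toMonoidHom _) intCyclicMulEquiv.surjective,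
      ← MonoidHom.range_eq_map, Subgroup.range_subtype]
    exact (QuotientGroup.ker_mk' N).symm
  rightHom_surjective := QuotientGroup.mk'_surjective N
  inl_mem_center a := hN (intCyclicMulEquiv (G := N) a).2

lemma isTorsionFree_additive_quotient [IsMulCommutative (G ⧸ N)]
    (hN : ∀ (g : G) (n : ℕ), 0 < n → g ^ n ∈ N → g ∈ N) :
    Module.IsTorsionFree ℤ (Additive (G ⧸ N)) := by
  refine Module.IsTorsionFree.of_smul_eq_zero fun k x hkx => or_iff_not_imp_left.2 fun hk => ?_
  obtain ⟨g, rfl⟩ := QuotientGroup.mk_surjective x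
  have hpow : ((g ^ k.natAbs : G) : G ⧸ N) = 1 := by
    rw [QuotientGroup.mk_pow, pow_natAbs_eq_one]
    exact hkx
  exact (QuotientGroup.eq_one_iff g).2
    (hN g _ (Int.natAbs_pos.2 hk) ((QuotientGroup.eq_one_iff _).1 hpow))

lemma free_additive_quotient [Group.FG G] [IsMulCommutative (G ⧸ N)]
    (hN : ∀ (g : G) (n : ℕ), 0 < n → g ^ n ∈ N → g ∈ N) :
    Module.Free ℤ (Additive (G ⧸ N)) := by
  have := isTorsionFree_additive_quotient hN
  exact Module.free_of_finite_type_torsion_free'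

lemma exists_mul_ne_swap_of_isolator (htf : ∀ (g : G) (n : ℕ), 0 < n → g ^ n = 1 → g = 1)
    {H : Subgroup G} [Nontrivial H]
    (hH : ∀ g ∈ H, ∃ n : ℕ, 0 < n ∧ g ^ n ∈ commutator G) : ∃ g h : G, g * h ≠ h * g := by
  by_contra! hcomm
  have hbot : commutator G = ⊥ := by
    rw [commutator_def, Subgroup.commutator_eq_bot_iff_le_centralizer]
    exact fun g _ => Subgroup.mem_centralizer_iff.2 fun h _ => hcomm h g
  obtain ⟨⟨g, hg⟩, hg_ne⟩ := exists_ne (1 : H)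
  obtain ⟨n, hn, hgn⟩ := hH g hg
  rw [hbot, Subgroup.mem_bot] at hgn
  exact hg_ne (Subtype.ext (htf g n hn hgn))

lemma exists_automorphism_transcendental_of_isolated [Group.FG G] [IsMulCommutative (G ⧸ N)]
    [IsCyclic N] [Infinite N] (hcenter : N ≤ Subgroup.center G)
    (hisolated : ∀ (g : G) (n : ℕ), 0 < n → g ^ n ∈ N → g ∈ N)
    (hnc : ∃ g h : G, g * h ≠ h * g) :
    ∃ ψ : G ≃* G, ∀ S : Finset G, Subgroup.closure (S : Set G) = ⊤ →
      Transcendental ℚ[X] (PowerSeries.mk fun n => (twistedGrowth ψ S n : ℚ)) := by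
  have := free_additive_quotient hisolated
  obtain ⟨W, d, B, hd, ⟨e⟩⟩ :=
    (CentralExtension.ofQuotient hcenter).exists_mulEquiv_splitHeisenberg hnc
  exact SplitHeisenberg.exists_automorphism_transcendental_of_mulEquiv hd e

end Isolator

/-- On every generalised Heisenberg group there is an automorphism whose twisted
conjugacy growth series is transcendental over `ℚ(x)` (equivalently over `ℚ[x]`),
for every finite generating set. -/
theorem exists_automorphism_transcendental_series
    (G : Type*) [Group G]
    (hfg : Group.FG G)
    (htf : ∀ (g : G) (n : ℕ), 0 < n → g ^ n = 1 → g = 1)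
    (h2step : commutator G ≤ Subgroup.center G)
    (G2 : Subgroup G) [G2.Normal]
    (hG2 : ∀ g : G, g ∈ G2 ↔ ∃ n : ℕ, 0 < n ∧ g ^ n ∈ commutator G)
    (hcyc : IsCyclic G2) (hinf : Infinite G2) :
    ∃ ψ : G ≃* G, ∀ S : Finset G, Subgroup.closure (S : Set G) = ⊤ →
      Transcendental (Polynomial ℚ)
        (PowerSeries.mk fun n => (twistedGrowth ψ S n : ℚ)) := by
  have hcenter : G2 ≤ Subgroup.center G := fun g hg => by
    obtain ⟨n, hn, hgn⟩ := (hG2 g).1 hg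
    exact mem_center_of_pow_mem_center htf h2step hn (h2step hgn)
  have hisolated (g : G) (n : ℕ) (hn : 0 < n) (hgn : g ^ n ∈ G2) : g ∈ G2 := by
    obtain ⟨m, hm, hgnm⟩ := (hG2 _).1 hgn
    exact (hG2 g).2 ⟨n * m, Nat.mul_pos hn hm, pow_mul g n m ▸ hgnm⟩
  have : IsMulCommutative (G ⧸ G2) :=
    Subgroup.Normal.quotient_commutative_iff_commutator_le.2
      fun g hg => (hG2 g).2 ⟨1, one_pos, (pow_one g).symm ▸ hg⟩
  exact exists_automorphism_transcendental_of_isolated hcenter hisolated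
    (exists_mul_ne_swap_of_isolator htf fun g => (hG2 g).1)
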